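/- arXiv:2211.04962 — 2 statements merged into one kernel-verified Lean document; each statement's English description precedes it below -/
import Mathlib

section
/- Let Λ and Γ be finite dimensional algebras over a field K, let M, N be finitely generated left Λ-modules and M', N' finitely generated left Γ-modules. Then for every integer p ≥ 0 there is an isomorphism Ext^p_{Λ⊗Γ}(M⊗M', N⊗N') ≅ ⊕_{i+j=p} Ext^i_Λ(M,N) ⊗ Ext^j_Γ(M',N') of K-vector spaces. -/
open TensorProduct

section Pre
variable {K Λ Γ M N : Type*} [Field K] [Ring Λ] [Ring Γ] [Algebra K Λ] [Algebra K Γ]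
  [AddCommGroup M] [Module K M] [Module Λ M] [IsScalarTower K Λ M]
  [AddCommGroup N] [Module K N] [Module Γ N] [IsScalarTower K Γ N]

/-- The action of `Γ` on `M ⊗[K] N` through the right factor. -/
noncomputable def rsmul (g : Γ) (x : M ⊗[K] N) : M ⊗[K] N :=
  (TensorProduct.comm K M N).symm (g • TensorProduct.comm K M N x)

lemma rsmul_tmul (g : Γ) (m : M) (n : N) :
    rsmul g (m ⊗ₜ[K] n) = m ⊗ₜ[K] (g • n) := by
  simp [rsmul, TensorProduct.smul_tmul']

lemma rsmul_add (g : Γ) (x y : M ⊗[K] N) :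
    rsmul g (x + y) = rsmul g x + rsmul g y := by
  simp [rsmul, smul_add]

/-- The right-factor `Γ`-module structure on `M ⊗[K] N`.  Not an instance, to avoid
diamonds; it is only used to construct `tensorTensorModule` below. -/
noncomputable def tensorRightModule : Module Γ (M ⊗[K] N) where
  smul := rsmul
  one_smul x := by show rsmul 1 x = x; simp [rsmul]
  mul_smul g h x := by
    show rsmul (g * h) x = rsmul g (rsmul h x); simp [rsmul, mul_smul]
  smul_zero g := by show rsmul g 0 = 0; simp [rsmul]
  smul_add g x y := by show rsmul g (x + y) = rsmul g x + rsmul g y; exact rsmul_add g x y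
  add_smul g h x := by
    show rsmul (g + h) x = rsmul g x + rsmul h x; simp [rsmul, add_smul]
  zero_smul x := by show rsmul 0 x = 0; simp [rsmul]

instance tensorLeftTower : IsScalarTower K Λ (M ⊗[K] N) := by
  constructor
  intro c a x
  induction x using TensorProduct.induction_on with
  | zero => simp
  | tmul m n =>
      rw [TensorProduct.smul_tmul', TensorProduct.smul_tmul', smul_assoc]
      exact (TensorProduct.smul_tmul' c (a • m) n).symm
  | add x y hx hy => rw [smul_add, smul_add, hx, hy]; exact (smul_add c _ _).symm

lemma pre_smulCommClass :
    letI : Module Γ (M ⊗[K] N) := tensorRightModule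
    SMulCommClass Λ Γ (M ⊗[K] N) := by
  letI : Module Γ (M ⊗[K] N) := tensorRightModule
  constructor
  intro a g x
  show a • rsmul g x = rsmul g (a • x)
  induction x using TensorProduct.induction_on with
  | zero => simp [rsmul]
  | tmul m n => rw [rsmul_tmul, TensorProduct.smul_tmul', TensorProduct.smul_tmul', rsmul_tmul]
  | add x y hx hy => rw [rsmul_add, smul_add, hx, hy, smul_add, rsmul_add]

lemma pre_rightTower :
    letI : Module Γ (M ⊗[K] N) := tensorRightModule
    IsScalarTower K Γ (M ⊗[K] N) := by
  letI : Module Γ (M ⊗[K] N) := tensorRightModule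
  constructor
  intro c g x
  show rsmul (c • g) x = c • rsmul g x
  unfold rsmul
  rw [smul_assoc]
  exact map_smul (TensorProduct.comm K M N).symm c _

/-- The `(Λ ⊗[K] Γ)`-module structure on `M ⊗[K] N`, characterized by
`(a ⊗ₜ b) • (m ⊗ₜ n) = (a • m) ⊗ₜ (b • n)`. -/
noncomputable instance tensorTensorModule :
    Module (Λ ⊗[K] Γ) (M ⊗[K] N) :=
  letI : Module Γ (M ⊗[K] N) := tensorRightModule
  haveI := (pre_smulCommClass (K := K) (Λ := Λ) (Γ := Γ) (M := M) (N := N))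
  haveI := (pre_rightTower (K := K) (Γ := Γ) (M := M) (N := N))
  TensorProduct.Algebra.module

lemma tensorTensor_smul_tmul (a : Λ) (g : Γ) (m : M) (n : N) :
    (a ⊗ₜ[K] g) • (m ⊗ₜ[K] n) = (a • m) ⊗ₜ[K] (g • n) := by
  letI : Module Γ (M ⊗[K] N) := tensorRightModule
  haveI := (pre_smulCommClass (K := K) (Λ := Λ) (Γ := Γ) (M := M) (N := N))
  haveI := (pre_rightTower (K := K) (Γ := Γ) (M := M) (N := N))
  show TensorProduct.Algebra.moduleAux (a ⊗ₜ[K] g) (m ⊗ₜ[K] n) = _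
  rw [TensorProduct.Algebra.moduleAux_apply]
  show a • rsmul g (m ⊗ₜ[K] n) = _
  rw [rsmul_tmul, TensorProduct.smul_tmul']

instance tensorTensorTower : IsScalarTower K (Λ ⊗[K] Γ) (M ⊗[K] N) := by
  constructor
  intro c x v
  letI : Module Γ (M ⊗[K] N) := tensorRightModule
  haveI := (pre_smulCommClass (K := K) (Λ := Λ) (Γ := Γ) (M := M) (N := N))
  haveI := (pre_rightTower (K := K) (Γ := Γ) (M := M) (N := N))
  show TensorProduct.Algebra.moduleAux (c • x) v = c • TensorProduct.Algebra.moduleAux x v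
  rw [map_smul, LinearMap.smul_apply]

end Pre

universe u

open CategoryTheory

noncomputable def extGrp (K : Type u) [Field K] (A : Type u) [Ring A] [Algebra K A]
    (n : ℕ) (X Y : Type u) [AddCommGroup X] [Module A X] [AddCommGroup Y] [Module A Y] :
    ModuleCat.{u} K :=
  ((_root_.Ext K (ModuleCat.{u} A) n).obj (Opposite.op (ModuleCat.of A X))).obj
    (ModuleCat.of A Y)

/-! For a bifunctor `F` exact in each variable, extension classes have a cross product
`α ⊗ β ↦ F(α, X') ∘ F(Y, β)`. The Künneth map sums the cross products over `i + j = p`; since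
tensoring over a field is exact, its source and its target are both `δ`-functors in `X`. Dimension
shifting along `0 → Z → Q → X → 0` with `Q` finite free reduces its bijectivity to `X` free, where
only the summand `Hom(X, Y) ⊗ Extᵖ(X', Y')` survives; this is a `δ`-functor in `X'`, so the same
argument reduces to `X'` free and `p = 0`. What remains is
`Hom(Λᵐ, N) ⊗ Hom(Γⁿ, N') ≅ Hom(Λᵐ ⊗ Γⁿ, N ⊗ N')`. -/

namespace ExtKunneth

open Limits Abelian

section Pi

variable {R ι : Type*} [Semiring R] {M N P : ι → Type*} [∀ i, AddCommMonoid (M i)]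
  [∀ i, AddCommMonoid (N i)] [∀ i, AddCommMonoid (P i)] [∀ i, Module R (M i)]
  [∀ i, Module R (N i)] [∀ i, Module R (P i)]

lemma exact_piMap {f : ∀ i, M i →ₗ[R] N i} {g : ∀ i, N i →ₗ[R] P i}
    (h : ∀ i, Function.Exact (f i) (g i)) :
    Function.Exact (LinearMap.piMap f) (LinearMap.piMap g) := by
  intro y
  exact funext_iff.trans <| (forall_congr' fun i => h i (y i)).trans <|
    Classical.skolem.trans (exists_congr fun x => funext_iff.symm)

end Pi

section DeltaFunctor

/-- A contravariant cohomological `δ`-functor from `C` to `R`-modules. The functoriality of `map`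
and the naturality of `δ` are not recorded: only the long exact sequences matter for dimension
shifting. -/
structure ContravariantDeltaFunctor (R : Type*) [CommRing R] (C : Type*) [Category* C]
    [HasZeroMorphisms C] where
  obj : C → ℕ → ModuleCat.{u} R
  map {X Y : C} (f : X ⟶ Y) (n : ℕ) : obj Y n →ₗ[R] obj X n
  δ {S : ShortComplex C} (hS : S.ShortExact) (n : ℕ) : obj S.X₁ n →ₗ[R] obj S.X₃ (n + 1)
  map_g_zero_injective {S : ShortComplex C} (hS : S.ShortExact) : Function.Injective (map S.g 0)
  exact_map_map {S : ShortComplex C} (hS : S.ShortExact) (n : ℕ) :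
    Function.Exact (map S.g n) (map S.f n)
  exact_map_δ {S : ShortComplex C} (hS : S.ShortExact) (n : ℕ) :
    Function.Exact (map S.f n) (δ hS n)
  exact_δ_map {S : ShortComplex C} (hS : S.ShortExact) (n : ℕ) :
    Function.Exact (δ hS n) (map S.g (n + 1))

/-- Every object satisfying `P` is a quotient of an object satisfying `Q`, with kernel satisfying
`P`. -/
def HasPresentations {C : Type*} [Category* C] [HasZeroMorphisms C] (P Q : ObjectProperty C) :
    Prop :=
  ∀ X, P X → ∃ S : ShortComplex C, S.ShortExact ∧ S.X₃ = X ∧ P S.X₁ ∧ Q S.X₂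

namespace ContravariantDeltaFunctor

variable {R : Type*} [CommRing R] {C : Type*} [Category* C] [HasZeroMorphisms C]

/-- A morphism of `δ`-functors: maps in each degree commuting with `map` and `δ`. -/
structure Hom (T U : ContravariantDeltaFunctor.{u} R C) where
  app (X : C) (n : ℕ) : T.obj X n →ₗ[R] U.obj X n
  map_comp_app {X Y : C} (f : X ⟶ Y) (n : ℕ) : U.map f n ∘ₗ app Y n = app X n ∘ₗ T.map f n
  δ_comp_app {S : ShortComplex C} (hS : S.ShortExact) (n : ℕ) :
    U.δ hS n ∘ₗ app S.X₁ n = app S.X₃ (n + 1) ∘ₗ T.δ hS n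

namespace Hom

variable {T U : ContravariantDeltaFunctor.{u} R C} (η : Hom T U) {S : ShortComplex C}

lemma app_zero_injective (hS : S.ShortExact) (h₂ : Function.Injective (η.app S.X₂ 0)) :
    Function.Injective (η.app S.X₃ 0) := by
  have h : Function.Injective (U.map S.g 0 ∘ₗ η.app S.X₃ 0) := by
    rw [η.map_comp_app, LinearMap.coe_comp]
    exact h₂.comp (T.map_g_zero_injective hS)
  exact Function.Injective.of_comp h

lemma app_zero_surjective (hS : S.ShortExact) (h₁ : Function.Injective (η.app S.X₁ 0))
    (h₂ : Function.Surjective (η.app S.X₂ 0)) : Function.Surjective (η.app S.X₃ 0) :=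
  LinearMap.surjective_of_surjective_of_injective_of_left_exact _ _ _ _ _ _ _
    (η.map_comp_app S.g 0) (η.map_comp_app S.f 0) (T.exact_map_map hS 0) (U.exact_map_map hS 0)
    h₂ h₁ (U.map_g_zero_injective hS)

lemma app_succ_injective (hS : S.ShortExact) {n : ℕ} (h₁ : Function.Injective (η.app S.X₁ n))
    (h₂ : ∀ m, Function.Bijective (η.app S.X₂ m)) : Function.Injective (η.app S.X₃ (n + 1)) :=
  LinearMap.injective_of_surjective_of_injective_of_injective _ _ _ _ _ _ _ _ _ _
    (η.map_comp_app S.f n) (η.δ_comp_app hS n) (η.map_comp_app S.g (n + 1))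
    (T.exact_map_δ hS n) (T.exact_δ_map hS n) (U.exact_map_δ hS n)
    (h₂ n).surjective h₁ (h₂ (n + 1)).injective

lemma app_succ_surjective (hS : S.ShortExact) {n : ℕ} (h₁ : Function.Surjective (η.app S.X₁ n))
    (h₁' : Function.Injective (η.app S.X₁ (n + 1)))
    (h₂ : ∀ m, Function.Bijective (η.app S.X₂ m)) : Function.Surjective (η.app S.X₃ (n + 1)) :=
  LinearMap.surjective_of_surjective_of_surjective_of_injective _ _ _ _ _ _ _ _ _ _
    (η.δ_comp_app hS n) (η.map_comp_app S.g (n + 1)) (η.map_comp_app S.f (n + 1))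
    (T.exact_map_map hS (n + 1)) (U.exact_δ_map hS n) (U.exact_map_map hS (n + 1))
    h₁ (h₂ (n + 1)).surjective h₁'

theorem app_bijective_of_hasPresentations {P Q : ObjectProperty C} (hPQ : HasPresentations P Q)
    (hQ : ∀ X, Q X → ∀ n, Function.Bijective (η.app X n)) (n : ℕ) :
    ∀ X, P X → Function.Bijective (η.app X n) := by
  induction n with
  | zero =>
    have injective X (hX : P X) : Function.Injective (η.app X 0) := by
      obtain ⟨S, hS, rfl, -, hS₂⟩ := hPQ X hX
      exact η.app_zero_injective hS (hQ _ hS₂ 0).injective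
    intro X hX
    refine ⟨injective X hX, ?_⟩
    obtain ⟨S, hS, rfl, hS₁, hS₂⟩ := hPQ X hX
    exact η.app_zero_surjective hS (injective _ hS₁) (hQ _ hS₂ 0).surjective
  | succ n ih =>
    have injective X (hX : P X) : Function.Injective (η.app X (n + 1)) := by
      obtain ⟨S, hS, rfl, hS₁, hS₂⟩ := hPQ X hX
      exact η.app_succ_injective hS (ih _ hS₁).injective (hQ _ hS₂)
    intro X hX
    refine ⟨injective X hX, ?_⟩
    obtain ⟨S, hS, rfl, hS₁, hS₂⟩ := hPQ X hX
    exact η.app_succ_surjective hS (ih _ hS₁).surjective (injective _ hS₁) (hQ _ hS₂)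

end Hom

section Constructions

variable {D : Type*} [Category* D] [HasZeroMorphisms D]

/-- The restriction of a `δ`-functor along an exact functor. -/
def comp (T : ContravariantDeltaFunctor.{u} R D) (F : C ⥤ D)
    [F.PreservesZeroMorphisms] [PreservesFiniteLimits F] [PreservesFiniteColimits F] :
    ContravariantDeltaFunctor.{u} R C where
  obj X := T.obj (F.obj X)
  map f := T.map (F.map f)
  δ hS := T.δ (hS.map_of_exact F)
  map_g_zero_injective hS := T.map_g_zero_injective (hS.map_of_exact F)
  exact_map_map hS := T.exact_map_map (hS.map_of_exact F)
  exact_map_δ hS := T.exact_map_δ (hS.map_of_exact F)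
  exact_δ_map hS := T.exact_δ_map (hS.map_of_exact F)

/-- The `δ`-functor `V ⊗ T`, for a flat module `V`. -/
noncomputable def lTensor (V : ModuleCat.{u} R) [Module.Flat R V]
    (T : ContravariantDeltaFunctor.{u} R C) : ContravariantDeltaFunctor.{u} R C where
  obj X n := ModuleCat.of R (V ⊗[R] T.obj X n)
  map f n := (T.map f n).lTensor V
  δ hS n := (T.δ hS n).lTensor V
  map_g_zero_injective hS :=
    Module.Flat.lTensor_preserves_injective_linearMap _ (T.map_g_zero_injective hS)
  exact_map_map hS n := Module.Flat.lTensor_exact V (T.exact_map_map hS n)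
  exact_map_δ hS n := Module.Flat.lTensor_exact V (T.exact_map_δ hS n)
  exact_δ_map hS n := Module.Flat.lTensor_exact V (T.exact_δ_map hS n)

open Finset.HasAntidiagonal (antidiagonal)

lemma succ_mem_antidiagonal {i j p : ℕ} :
    (i + 1, j) ∈ antidiagonal (p + 1) ↔ (i, j) ∈ antidiagonal p := by
  simp only [Finset.HasAntidiagonal.mem_antidiagonal]
  lia

lemma forall_antidiagonal_succ {p : ℕ} {motive : antidiagonal (p + 1) → Prop} :
    (∀ ij, motive ij) ↔ motive ⟨(0, p + 1), by simp⟩ ∧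
      ∀ ij : antidiagonal p, motive ⟨(ij.1.1 + 1, ij.1.2), succ_mem_antidiagonal.2 ij.2⟩ := by
  refine ⟨fun h => ⟨h _, fun _ => h _⟩, fun h => ?_⟩
  rintro ⟨⟨_ | i, j⟩, hij⟩
  · obtain rfl : j = p + 1 := by simpa using hij
    exact h.1
  · exact h.2 ⟨(i, j), succ_mem_antidiagonal.1 hij⟩

lemma sum_antidiagonal_succ {M : Type*} [AddCommMonoid M] {p : ℕ} (f : antidiagonal (p + 1) → M) :
    ∑ ij, f ij = f ⟨(0, p + 1), by simp⟩ +
      ∑ ij : antidiagonal p, f ⟨(ij.1.1 + 1, ij.1.2), succ_mem_antidiagonal.2 ij.2⟩ := by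
  let e : Option (antidiagonal p) → antidiagonal (p + 1)
    | none => ⟨(0, p + 1), by simp⟩
    | some ij => ⟨(ij.1.1 + 1, ij.1.2), succ_mem_antidiagonal.2 ij.2⟩
  have e_bijective : Function.Bijective e := by
    refine ⟨?_, forall_antidiagonal_succ.2 ⟨⟨none, rfl⟩, fun ij => ⟨some ij, rfl⟩⟩⟩
    rintro (_ | ⟨⟨i, j⟩, h⟩) (_ | ⟨⟨i', j'⟩, h'⟩) hee <;> simp_all [e]
  rw [← e_bijective.sum_comp, Fintype.sum_option]

/-- The connecting map `⨁_{i+j=p} Tⁱ(S.X₁) ⊗ Vʲ → ⨁_{i+j=p+1} Tⁱ(S.X₃) ⊗ Vʲ` induced by that of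
`T`. Its component of index `(0, p + 1)` vanishes. -/
noncomputable def sumTensorδ (T : ContravariantDeltaFunctor.{u} R C) (V : ℕ → ModuleCat.{u} R)
    {S : ShortComplex C} (hS : S.ShortExact) (p : ℕ) :
    (Π ij : antidiagonal p, T.obj S.X₁ ij.1.1 ⊗[R] V ij.1.2) →ₗ[R]
      Π ij : antidiagonal (p + 1), T.obj S.X₃ ij.1.1 ⊗[R] V ij.1.2 :=
  LinearMap.pi fun
    | ⟨(0, _), _⟩ => 0
    | ⟨(i + 1, j), h⟩ => (T.δ hS i).rTensor (V j) ∘ₗ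
        LinearMap.proj (⟨(i, j), succ_mem_antidiagonal.1 h⟩ : antidiagonal p)

lemma sumTensorδ_eq_zero_iff (T : ContravariantDeltaFunctor.{u} R C) (V : ℕ → ModuleCat.{u} R)
    {S : ShortComplex C} (hS : S.ShortExact) (p : ℕ)
    (x : Π ij : antidiagonal p, T.obj S.X₁ ij.1.1 ⊗[R] V ij.1.2) :
    T.sumTensorδ V hS p x = 0 ↔
      LinearMap.piMap (fun ij : antidiagonal p => (T.δ hS ij.1.1).rTensor (V ij.1.2)) x = 0 := by
  rw [funext_iff, forall_antidiagonal_succ, funext_iff]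
  exact and_iff_right rfl

/-- The `δ`-functor `X ↦ ⨁_{i+j=p} Tⁱ(X) ⊗ Vʲ`, for a sequence `V` of flat modules. The finite
direct sum is encoded as the product over `antidiagonal p`, on which exactness is componentwise. -/
noncomputable def sumTensor (T : ContravariantDeltaFunctor.{u} R C) (V : ℕ → ModuleCat.{u} R)
    [∀ j, Module.Flat R (V j)] : ContravariantDeltaFunctor.{u} R C where
  obj X p := ModuleCat.of R (Π ij : antidiagonal p, T.obj X ij.1.1 ⊗[R] V ij.1.2)
  map f p := LinearMap.piMap fun ij => (T.map f ij.1.1).rTensor (V ij.1.2)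
  δ := T.sumTensorδ V
  map_g_zero_injective hS := by
    refine Function.Injective.piMap ?_
    rintro ⟨⟨i, j⟩, h⟩
    obtain ⟨rfl, -⟩ : i = 0 ∧ j = 0 := by simpa using h
    exact Module.Flat.rTensor_preserves_injective_linearMap _ (T.map_g_zero_injective hS)
  exact_map_map hS p := exact_piMap fun ij => Module.Flat.rTensor_exact _ (T.exact_map_map hS _)
  exact_map_δ hS p := by
    intro x
    rw [sumTensorδ_eq_zero_iff]
    exact exact_piMap (fun ij => Module.Flat.rTensor_exact _ (T.exact_map_δ hS _)) x
  exact_δ_map {S} hS p := by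
    intro x
    have exact_succ (ij : antidiagonal p) :=
      Module.Flat.rTensor_exact (V ij.1.2) (T.exact_δ_map hS ij.1.1)
    have injective_zero :=
      Module.Flat.rTensor_preserves_injective_linearMap (M := V (p + 1)) _
        (T.map_g_zero_injective hS)
    refine ⟨fun hx => ?_, ?_⟩
    · obtain ⟨hx₀, hx₁⟩ := forall_antidiagonal_succ.1 (congrFun hx)
      choose y hy using fun ij => (exact_succ ij _).1 (hx₁ ij)
      refine ⟨y, funext (forall_antidiagonal_succ.2 ⟨?_, hy⟩)⟩
      exact injective_zero ((map_zero _).trans hx₀.symm)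
    · rintro ⟨y, rfl⟩
      exact funext (forall_antidiagonal_succ.2
        ⟨map_zero ((T.map S.g 0).rTensor (V (p + 1))), fun ij =>
          (exact_succ ij).apply_apply_eq_zero (y ij)⟩)

end Constructions

end ContravariantDeltaFunctor

end DeltaFunctor

section Ext

variable {C : Type*} [Category* C] [Abelian C] [HasExt.{u} C]

/-- The `δ`-functor `X ↦ Extⁿ(X, Y)`. -/
noncomputable def extDeltaFunctor (R : Type*) [CommRing R] [Linear R C] (Y : C) :
    ContravariantDeltaFunctor.{u} R C where
  obj X n := ModuleCat.of R (Ext X Y n)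
  map f n := (Ext.mk₀ f).precompOfLinear R Y (zero_add n)
  δ hS n := hS.extClass.precompOfLinear R Y (add_comm 1 n)
  map_g_zero_injective hS :=
    haveI := hS.epi_g
    Ext.precomp_mk₀_injective_of_epi Y _
  exact_map_map hS n x := by
    refine ⟨Ext.contravariant_sequence_exact₂ hS Y x, ?_⟩
    rintro ⟨y, rfl⟩
    exact (Ext.mk₀_comp_mk₀_assoc _ _ _).trans (by
      rw [ShortComplex.zero, Ext.mk₀_zero, Ext.zero_comp])
  exact_map_δ hS n x := by
    refine ⟨Ext.contravariant_sequence_exact₁ hS Y x (add_comm 1 n), ?_⟩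
    rintro ⟨y, rfl⟩
    exact hS.extClass_comp_assoc y (h := add_comm 1 n)
  exact_δ_map hS n x := by
    refine ⟨fun hx => Ext.contravariant_sequence_exact₃ hS Y x hx (add_comm 1 n), ?_⟩
    rintro ⟨y, rfl⟩
    exact hS.comp_extClass_assoc y (add_comm 1 n)

section NaturalTransformation

variable {D : Type*} [Category* D] [Abelian D] [HasExt.{u} D] {F G : C ⥤ D} [F.Additive]
  [G.Additive] [PreservesFiniteLimits F] [PreservesFiniteLimits G] [PreservesFiniteColimits F]
  [PreservesFiniteColimits G] (τ : F ⟶ G)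

lemma mk₀_app_comp_mapExactFunctor_mk₀ {X Y : C} (f : X ⟶ Y) :
    (Ext.mk₀ (τ.app X)).comp ((Ext.mk₀ f).mapExactFunctor G) (zero_add 0) =
      ((Ext.mk₀ f).mapExactFunctor F).comp (Ext.mk₀ (τ.app Y)) (add_zero 0) := by
  simp only [Ext.mapExactFunctor_mk₀, Ext.mk₀_comp_mk₀, τ.naturality]

lemma mk₀_app_comp_mapExactFunctor_extClass {S : ShortComplex C} (hS : S.ShortExact) :
    (Ext.mk₀ (τ.app S.X₃)).comp (hS.extClass.mapExactFunctor G) (zero_add 1) =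
      (hS.extClass.mapExactFunctor F).comp (Ext.mk₀ (τ.app S.X₁)) (add_zero 1) := by
  simp only [Ext.mapExactFunctor_extClass]
  exact (ShortComplex.ShortExact.extClass_naturality _ _ (S.mapNatTrans τ)).symm

end NaturalTransformation

end Ext

section CrossProduct

variable {C D E : Type*} [Category* C] [Category* D] [Category* E] [Abelian C] [Abelian D]
  [Abelian E] [HasExt.{u} C] [HasExt.{u} D] [HasExt.{u} E] {K : Type*} [CommRing K]
  [Linear K C] [Linear K D] [Linear K E] (F : C ⥤ D ⥤ E)
  [∀ X, (F.obj X).Additive] [∀ X, (F.obj X).Linear K]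
  [∀ X, PreservesFiniteLimits (F.obj X)] [∀ X, PreservesFiniteColimits (F.obj X)]
  [∀ X', (F.flip.obj X').Additive] [∀ X', (F.flip.obj X').Linear K]
  [∀ X', PreservesFiniteLimits (F.flip.obj X')] [∀ X', PreservesFiniteColimits (F.flip.obj X')]

variable (K) in
/-- The cross product `α ⊗ β ↦ F(α, X') ∘ F(Y, β)` of extension classes along a biexact
bifunctor `F`. -/
noncomputable def crossProduct (X Y : C) (X' Y' : D) {i j p : ℕ} (h : i + j = p) :
    Ext X Y i ⊗[K] Ext X' Y' j →ₗ[K] Ext ((F.obj X).obj X') ((F.obj Y).obj Y') p :=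
  TensorProduct.lift <|
    (Ext.bilinearCompOfLinear K _ ((F.obj Y).obj X') _ i j p h).compl₁₂
      ((F.flip.obj X').mapExtLinearMap K X Y i) ((F.obj Y).mapExtLinearMap K X' Y' j)

lemma crossProduct_tmul {X Y : C} {X' Y' : D} {i j p : ℕ} (h : i + j = p) (α : Ext X Y i)
    (β : Ext X' Y' j) :
    crossProduct K F X Y X' Y' h (α ⊗ₜ β) =
      (α.mapExactFunctor (F.flip.obj X')).comp (β.mapExactFunctor (F.obj Y)) h := rfl

lemma precomp_comp_crossProduct_left {X Z : C} {a i i' j p p' : ℕ} (γ : Ext X Z a) (Y : C)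
    (X' Y' : D) (hi : a + i = i') (h : i + j = p) (h' : i' + j = p') (hp : a + p = p') :
    (γ.mapExactFunctor (F.flip.obj X')).precompOfLinear K _ hp ∘ₗ crossProduct K F Z Y X' Y' h =
      crossProduct K F X Y X' Y' h' ∘ₗ (γ.precompOfLinear K Y hi).rTensor _ := by
  refine TensorProduct.ext' fun α β => ?_
  change _ = crossProduct K F X Y X' Y' h' (γ.comp α hi ⊗ₜ β)
  rw [crossProduct_tmul, Ext.mapExactFunctor_comp]
  exact (Ext.comp_assoc _ _ _ hi h (by lia)).symm

lemma precomp_comp_crossProduct_right {X' Z' : D} {a j j' : ℕ} (γ : Ext X' Z' a) (X Y : C) (Y' : D)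
    (hγ : ∀ f : X ⟶ Y,
      (Ext.mk₀ ((F.map f).app X')).comp (γ.mapExactFunctor (F.obj Y)) (zero_add a) =
        (γ.mapExactFunctor (F.obj X)).comp (Ext.mk₀ ((F.map f).app Z')) (add_zero a))
    (hj : a + j = j') :
    (γ.mapExactFunctor (F.obj X)).precompOfLinear K _ hj ∘ₗ
        crossProduct K F X Y Z' Y' (zero_add j) =
      crossProduct K F X Y X' Y' (zero_add j') ∘ₗ (γ.precompOfLinear K Y' hj).lTensor _ := by
  refine TensorProduct.ext' fun α β => ?_
  obtain ⟨f, rfl⟩ := (Ext.mk₀_bijective X Y).surjective α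
  change (γ.mapExactFunctor (F.obj X)).comp
      (crossProduct K F X Y Z' Y' (zero_add j) (Ext.mk₀ f ⊗ₜ β)) hj =
    crossProduct K F X Y X' Y' (zero_add j') (Ext.mk₀ f ⊗ₜ γ.comp β hj)
  simp only [crossProduct_tmul, Ext.mapExactFunctor_comp, Ext.mapExactFunctor_mk₀]
  rw [← Ext.comp_assoc (a₁₂ := a) (a₂₃ := j) _ _ _ (by lia) (by lia) (by lia)]
  rw [← Ext.comp_assoc (a₁₂ := a) (a₂₃ := j') _ _ _ (by lia) (by lia) (by lia)]
  exact congrArg (fun ε => Ext.comp ε (β.mapExactFunctor (F.obj Y)) hj) (hγ f).symm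

/-- The cross product with classes of degree `0`, as a morphism of `δ`-functors in the second
variable. -/
noncomputable def crossProductHom (X Y : C) (Y' : D) [Module.Flat K (Ext X Y 0)] :
    ((extDeltaFunctor K Y').lTensor (ModuleCat.of K (Ext X Y 0))).Hom
      ((extDeltaFunctor K ((F.obj Y).obj Y')).comp (F.obj X)) where
  app X' n := crossProduct K F X Y X' Y' (zero_add n)
  map_comp_app f n := by
    have := precomp_comp_crossProduct_right (K := K) F (Ext.mk₀ f) X Y Y'
      (fun g => mk₀_app_comp_mapExactFunctor_mk₀ (F.map g) f) (zero_add n)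
    rwa [Ext.mapExactFunctor_mk₀] at this
  δ_comp_app hS n := by
    have := precomp_comp_crossProduct_right (K := K) F hS.extClass X Y Y'
      (fun g => mk₀_app_comp_mapExactFunctor_extClass (F.map g) hS) (add_comm 1 n)
    rwa [Ext.mapExactFunctor_extClass] at this

open Finset.HasAntidiagonal (antidiagonal mem_antidiagonal)

variable (K) in
/-- The Künneth map `⨁_{i+j=p} Extⁱ(X, Y) ⊗ Extʲ(X', Y') → Extᵖ(F(X, X'), F(Y, Y'))`, with the
finite direct sum encoded as the product over `antidiagonal p`. -/
noncomputable def kunnethMap (X Y : C) (X' Y' : D) (p : ℕ) :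
    (Π ij : antidiagonal p, Ext X Y ij.1.1 ⊗[K] Ext X' Y' ij.1.2) →ₗ[K]
      Ext ((F.obj X).obj X') ((F.obj Y).obj Y') p :=
  LinearMap.lsum K _ K fun ij => crossProduct K F X Y X' Y' (mem_antidiagonal.1 ij.2)

lemma kunnethMap_apply (X Y : C) (X' Y' : D) (p : ℕ)
    (x : Π ij : antidiagonal p, Ext X Y ij.1.1 ⊗[K] Ext X' Y' ij.1.2) :
    kunnethMap K F X Y X' Y' p x =
      ∑ ij, crossProduct K F X Y X' Y' (mem_antidiagonal.1 ij.2) (x ij) := by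
  simp [kunnethMap, LinearMap.lsum_apply]

lemma precomp_comp_kunnethMap {X Z : C} (γ : Ext X Z 0) (Y : C) (X' Y' : D) (p : ℕ) :
    (γ.mapExactFunctor (F.flip.obj X')).precompOfLinear K _ (zero_add p) ∘ₗ
        kunnethMap K F Z Y X' Y' p =
      kunnethMap K F X Y X' Y' p ∘ₗ LinearMap.piMap fun ij : antidiagonal p =>
        (γ.precompOfLinear K Y (zero_add ij.1.1)).rTensor (Ext X' Y' ij.1.2) := by
  refine LinearMap.ext fun x => ?_
  simp only [LinearMap.comp_apply, kunnethMap_apply, map_sum]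
  exact Finset.sum_congr rfl fun ij _ =>
    LinearMap.congr_fun (precomp_comp_crossProduct_left F γ Y X' Y' _ _ _ (zero_add p)) (x ij)

open ContravariantDeltaFunctor in
lemma precomp_extClass_comp_kunnethMap {S : ShortComplex C} (hS : S.ShortExact) (Y : C) (X' Y' : D)
    (p : ℕ) :
    (hS.extClass.mapExactFunctor (F.flip.obj X')).precompOfLinear K _ (add_comm 1 p) ∘ₗ
        kunnethMap K F S.X₁ Y X' Y' p =
      kunnethMap K F S.X₃ Y X' Y' (p + 1) ∘ₗ
        (extDeltaFunctor K Y).sumTensorδ (fun j => ModuleCat.of K (Ext X' Y' j)) hS p := by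
  refine LinearMap.ext fun x => ?_
  rw [LinearMap.comp_apply, kunnethMap_apply, map_sum]
  refine Eq.trans ?_ (kunnethMap_apply F S.X₃ Y X' Y' (p + 1) _).symm
  rw [sum_antidiagonal_succ, ← zero_add (∑ _, _)]
  refine congrArg₂ _ (map_zero (crossProduct K F S.X₃ Y X' Y' (zero_add (p + 1)))).symm ?_
  exact Finset.sum_congr rfl fun ij _ => LinearMap.congr_fun
    (precomp_comp_crossProduct_left F hS.extClass Y X' Y' _ _ _ (add_comm 1 p)) (x ij)

/-- The Künneth map as a morphism of `δ`-functors in the first variable. -/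
noncomputable def kunnethHom (Y : C) (X' Y' : D) [∀ j, Module.Flat K (Ext X' Y' j)] :
    ((extDeltaFunctor K Y).sumTensor fun j => ModuleCat.of K (Ext X' Y' j)).Hom
      ((extDeltaFunctor K ((F.obj Y).obj Y')).comp (F.flip.obj X')) where
  app X p := kunnethMap K F X Y X' Y' p
  map_comp_app f p := by
    have := precomp_comp_kunnethMap (K := K) F (Ext.mk₀ f) Y X' Y' p
    rwa [Ext.mapExactFunctor_mk₀] at this
  δ_comp_app hS p := by
    have := precomp_extClass_comp_kunnethMap (K := K) F hS Y X' Y' p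
    rwa [Ext.mapExactFunctor_extClass] at this

lemma lsum_bijective_of_subsingleton {R ι V : Type*} [CommRing R] [Fintype ι] [DecidableEq ι]
    {M : ι → Type*} [∀ i, AddCommGroup (M i)] [∀ i, Module R (M i)] [AddCommGroup V] [Module R V]
    {f : ∀ i, M i →ₗ[R] V} {i₀ : ι} (hi₀ : Function.Bijective (f i₀))
    (h : ∀ i ≠ i₀, Subsingleton (M i)) : Function.Bijective (LinearMap.lsum R M R f) := by
  have lsum_eq : LinearMap.lsum R M R f = f i₀ ∘ₗ LinearMap.proj i₀ := by
    refine LinearMap.pi_ext fun i m => ?_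
    rw [LinearMap.lsum_piSingle]
    obtain rfl | hi := eq_or_ne i i₀
    · simp
    · have := h i hi
      simp [Subsingleton.elim m 0]
  rw [lsum_eq, LinearMap.coe_comp]
  refine hi₀.comp ⟨fun x y hxy => funext fun i => ?_, Function.surjective_eval i₀⟩
  obtain rfl | hi := eq_or_ne i i₀
  · exact hxy
  · have := h i hi
    exact Subsingleton.elim _ _

variable {P Q : ObjectProperty C} {P' Q' : ObjectProperty D}

theorem crossProduct_zero_bijective_of_projective {X Y : C} {Y' : D} [Module.Flat K (Ext X Y 0)]
    (hPQ' : HasPresentations P' Q') (hQ' : ∀ X', Q' X' → Projective X')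
    (hX : ∀ X', Q' X' → Projective ((F.obj X).obj X'))
    (h : ∀ X', Q' X' → Function.Bijective (crossProduct K F X Y X' Y' (zero_add 0)))
    (n : ℕ) : ∀ X', P' X' → Function.Bijective (crossProduct K F X Y X' Y' (zero_add n)) := by
  refine (crossProductHom F X Y Y').app_bijective_of_hasPresentations hPQ' ?_ n
  rintro X' hX' (_ | n)
  · exact h X' hX'
  · have := hQ' X' hX'
    have := hX X' hX'
    have : Subsingleton (Ext X' Y' (n + 1)) := Ext.subsingleton_of_projective X' Y' n
    have := Ext.subsingleton_of_projective.{u} ((F.obj X).obj X') ((F.obj Y).obj Y') n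
    change Function.Bijective (crossProduct K F X Y X' Y' (zero_add (n + 1)))
    exact ⟨Function.injective_of_subsingleton _, fun y => ⟨0, Subsingleton.elim _ _⟩⟩

theorem kunnethMap_bijective {Y : C} {X' Y' : D}
    [∀ X, Module.Flat K (Ext X Y 0)] [∀ j, Module.Flat K (Ext X' Y' j)]
    (hPQ : HasPresentations P Q) (hQ : ∀ X, Q X → Projective X)
    (hPQ' : HasPresentations P' Q') (hQ' : ∀ X', Q' X' → Projective X')
    (hQQ' : ∀ X X', Q X → Q' X' → Projective ((F.obj X).obj X'))
    (h : ∀ X X', Q X → Q' X' → Function.Bijective (crossProduct K F X Y X' Y' (zero_add 0)))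
    (hX' : P' X') (p : ℕ) :
    ∀ X, P X → Function.Bijective (kunnethMap K F X Y X' Y' p) := by
  refine (kunnethHom F Y X' Y').app_bijective_of_hasPresentations hPQ (fun X hX p => ?_) p
  have := hQ X hX
  refine lsum_bijective_of_subsingleton (i₀ := ⟨(0, p), by simp⟩)
    (crossProduct_zero_bijective_of_projective F hPQ' hQ' (fun X' => hQQ' X X' hX)
      (fun X' => h X X' hX) p X' hX') ?_
  rintro ⟨⟨_ | i, j⟩, hij⟩ hne
  · exact (hne (Subtype.ext (Prod.ext rfl (by simpa using hij)))).elim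
  · have := Ext.subsingleton_of_projective.{u} X Y i
    infer_instance

end CrossProduct

section DerivedExt

/-- Computes the homology of a short complex of modules as the target of a surjection whose kernel
consists of the boundaries. -/
noncomputable def homologyEquivOfSurjective {R : Type*} [Ring R] (S : ShortComplex (ModuleCat R))
    {V : Type*} [AddCommGroup V] [Module R V] (φ : LinearMap.ker S.g.hom →ₗ[R] V)
    (hφ : Function.Surjective φ) (hker : LinearMap.range S.moduleCatToCycles = LinearMap.ker φ) :
    S.homology ≃ₗ[R] V :=
  S.moduleCatHomologyIso.toLinearEquiv ≪≫ₗ Submodule.quotEquivOfEq _ _ hker ≪≫ₗ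
    φ.quotKerEquivOfSurjective hφ

variable {C : Type*} [Category* C] [Abelian C] [HasExt C] {X : C} (P : ProjectiveResolution X)

lemma extMk_eq_zero_iff_of_degree_zero {Y : C} (f : P.complex.X 0 ⟶ Y)
    (hf : P.complex.d 1 0 ≫ f = 0) : P.extMk f 1 rfl hf = 0 ↔ f = 0 := by
  refine ⟨fun h => ?_, by rintro rfl; exact P.extMk_zero 1 rfl⟩
  rw [← P.extEquivCohomologyClass.apply_eq_iff_eq,
    P.extEquivCohomologyClass_extMk, P.extEquivCohomologyClass_zero,
    CochainComplex.HomComplex.CohomologyClass.mk_eq_zero_iff,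
    CochainComplex.HomComplex.Cocycle.toSingleMk_mem_coboundaries_iff _ _ _ _ _ 1 (by simp)] at h
  obtain ⟨g, hg⟩ := h
  have d_eq_zero : P.cochainComplex.d (-((0 : ℕ) : ℤ)) 1 = 0 :=
    (P.cochainComplex.isZero_of_isStrictlyLE 0 1 (by simp)).eq_of_tgt _ _
  rw [d_eq_zero, zero_comp] at hg
  rw [← cancel_epi (P.cochainComplexXIso (-(0 : ℕ)) 0 rfl).hom, ← hg, comp_zero]

variable {R : Type*} [Ring R] [Linear R C]

lemma smul_extMk {Y : C} {n : ℕ} (f : P.complex.X n ⟶ Y) (m : ℕ) (hm : n + 1 = m)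
    (hf : P.complex.d m n ≫ f = 0) (r : R) :
    r • P.extMk f m hm hf = P.extMk (r • f) m hm (by rw [Linear.comp_smul, hf, smul_zero]) := by
  rw [Ext.smul_eq_comp_mk₀, P.extMk_comp_mk₀]
  simp only [Linear.comp_smul, Category.comp_id]

variable (R) in
/-- The linear map sending a cocycle of `Hom(P, Y)` to its extension class. -/
noncomputable def extOfCocycle (Y : C) (n : ℕ) :
    LinearMap.ker ((P.complex.linearYonedaObj R Y).d n (n + 1)).hom →ₗ[R] Ext X Y n where
  toFun z := P.extMk z.1 (n + 1) rfl z.2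
  map_add' _ _ := (P.add_extMk _ _ _ _ _ _).symm
  map_smul' _ _ := (smul_extMk P _ _ _ _ _).symm

lemma extOfCocycle_surjective (Y : C) (n : ℕ) : Function.Surjective (extOfCocycle P R Y n) := by
  intro α
  obtain ⟨f, hf, rfl⟩ := P.extMk_surjective α (n + 1) rfl
  exact ⟨⟨f, hf⟩, rfl⟩

lemma extOfCocycle_eq_zero_iff (Y : C) (n : ℕ)
    (z : LinearMap.ker ((P.complex.linearYonedaObj R Y).d n (n + 1)).hom) :
    extOfCocycle P R Y n z = 0 ↔
      ∃ y, ((P.complex.linearYonedaObj R Y).d ((ComplexShape.up ℕ).prev n) n).hom y = z := by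
  obtain ⟨f, hf⟩ := z
  cases n with
  | zero =>
    refine (extMk_eq_zero_iff_of_degree_zero P f hf).trans ?_
    rw [HomologicalComplex.shape (P.complex.linearYonedaObj R Y) _ 0 (by simp)]
    exact ⟨fun h => ⟨0, h.symm⟩, fun ⟨y, h⟩ => h.symm⟩
  | succ n =>
    refine (P.extMk_eq_zero_iff f (n + 1 + 1) rfl hf n rfl).trans ?_
    rw [show (ComplexShape.up ℕ).prev (n + 1) = n by simp]
    rfl

variable (R) in
/-- The `Ext` defined as the left derived functor of `Hom` agrees with the `Ext` defined by
morphisms in the derived category. -/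
noncomputable def derivedExtEquiv [EnoughProjectives C] (X Y : C) (n : ℕ) :
    ((_root_.Ext R C n).obj (Opposite.op X)).obj Y ≃ₗ[R] Ext X Y n :=
  let P := projectiveResolution X
  let complex := P.complex.linearYonedaObj R Y
  (P.isoExt n Y ≪≫ complex.homologyIsoSc' _ n (n + 1) rfl (by simp)).toLinearEquiv ≪≫ₗ
    homologyEquivOfSurjective (complex.sc' _ n (n + 1)) (extOfCocycle P R Y n)
      (extOfCocycle_surjective P Y n) (by
        ext z
        refine Iff.trans ?_ (extOfCocycle_eq_zero_iff P Y n z).symm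
        exact ⟨fun ⟨y, h⟩ => ⟨y, congrArg Subtype.val h⟩, fun ⟨y, h⟩ => ⟨y, Subtype.ext h⟩⟩)

end DerivedExt

section FunTensorFun

/-- The isomorphism `(ι → V) ⊗ (κ → W) ≅ (ι × κ → V ⊗ W)`, for finite `ι` and `κ`. -/
noncomputable def funTensorFunEquiv (K V W ι κ : Type*) [CommRing K] [AddCommGroup V] [Module K V]
    [AddCommGroup W] [Module K W] [Finite ι] [Finite κ] :
    (ι → V) ⊗[K] (κ → W) ≃ₗ[K] (ι × κ → V ⊗[K] W) :=
  TensorProduct.congr (Finsupp.linearEquivFunOnFinite K V ι).symm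
      (Finsupp.linearEquivFunOnFinite K W κ).symm ≪≫ₗ
    finsuppTensorFinsupp K K V W ι κ ≪≫ₗ Finsupp.linearEquivFunOnFinite K (V ⊗[K] W) (ι × κ)

lemma funTensorFunEquiv_tmul {K V W ι κ : Type*} [CommRing K] [AddCommGroup V] [Module K V]
    [AddCommGroup W] [Module K W] [Finite ι] [Finite κ] (v : ι → V) (w : κ → W) (ik : ι × κ) :
    funTensorFunEquiv K V W ι κ (v ⊗ₜ w) ik = v ik.1 ⊗ₜ w ik.2 := by
  obtain ⟨i, k⟩ := ik
  simp [funTensorFunEquiv, finsuppTensorFinsupp_apply]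

end FunTensorFun

section BoxMap

variable {K Λ Γ M N M' N' : Type*} [Field K] [Ring Λ] [Ring Γ] [Algebra K Λ] [Algebra K Γ]
  [AddCommGroup M] [Module K M] [Module Λ M] [IsScalarTower K Λ M]
  [AddCommGroup N] [Module K N] [Module Λ N] [IsScalarTower K Λ N]
  [AddCommGroup M'] [Module K M'] [Module Γ M'] [IsScalarTower K Γ M']
  [AddCommGroup N'] [Module K N'] [Module Γ N'] [IsScalarTower K Γ N']

variable (K) in
/-- The tensor product of a `Λ`-linear map and a `Γ`-linear map, as a `Λ ⊗ Γ`-linear map. -/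
noncomputable def boxMap (f : M →ₗ[Λ] N) (g : M' →ₗ[Γ] N') :
    M ⊗[K] M' →ₗ[Λ ⊗[K] Γ] N ⊗[K] N' where
  __ := TensorProduct.map (f.restrictScalars K) (g.restrictScalars K)
  map_smul' a x := by
    induction a with
    | zero => simp
    | add a a' ha ha' => simp_all [add_smul]
    | tmul a g =>
      induction x with
      | zero => simp
      | add x y hx hy => simp_all
      | tmul m m' => simp [tensorTensor_smul_tmul]

lemma boxMap_tmul (f : M →ₗ[Λ] N) (g : M' →ₗ[Γ] N') (m : M) (m' : M') :
    boxMap K f g (m ⊗ₜ m') = f m ⊗ₜ g m' := rfl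

lemma box_hom_ext {Z : Type*} [AddCommGroup Z] [Module (Λ ⊗[K] Γ) Z]
    {f g : M ⊗[K] M' →ₗ[Λ ⊗[K] Γ] Z} (h : ∀ m m', f (m ⊗ₜ m') = g (m ⊗ₜ m')) : f = g := by
  ext x
  induction x with
  | zero => simp
  | add x y hx hy => simp [hx, hy]
  | tmul m m' => exact h m m'

variable (K Λ Γ M N M' N') in
/-- The map `Hom(M, N) ⊗ Hom(M', N') → Hom(M ⊗ M', N ⊗ N')` induced by `boxMap`. -/
noncomputable def boxHomMap :
    (M →ₗ[Λ] N) ⊗[K] (M' →ₗ[Γ] N') →ₗ[K] M ⊗[K] M' →ₗ[Λ ⊗[K] Γ] N ⊗[K] N' :=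
  TensorProduct.lift <| LinearMap.mk₂ K (boxMap K)
    (fun _ _ _ => box_hom_ext fun _ _ => add_tmul _ _ _)
    (fun _ _ _ => box_hom_ext fun _ _ => (smul_tmul' _ _ _).symm)
    (fun _ _ _ => box_hom_ext fun _ _ => tmul_add _ _ _)
    (fun _ _ _ => box_hom_ext fun _ _ => tmul_smul _ _ _)

section Basis

variable {ι κ : Type*} (b : Module.Basis ι Λ M) (c : Module.Basis κ Γ M')

variable (K) in
/-- The family `b i ⊗ c k`, as a basis of `M ⊗ M'` over `Λ ⊗ Γ`. -/
noncomputable def boxBasis : Module.Basis (ι × κ) (Λ ⊗[K] Γ) (M ⊗[K] M') :=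
  .ofRepr
    { TensorProduct.congr (b.repr.restrictScalars K) (c.repr.restrictScalars K) ≪≫ₗ
        finsuppTensorFinsupp K K Λ Γ ι κ with
      map_smul' := fun a x => by
        induction a with
        | zero => simp
        | add a a' ha ha' => simp_all [add_smul]
        | tmul a g =>
          induction x with
          | zero => simp
          | add x y hx hy => simp_all
          | tmul m m' =>
            ext ⟨i, k⟩
            simp [tensorTensor_smul_tmul, finsuppTensorFinsupp_apply] }

lemma boxBasis_apply (ik : ι × κ) : boxBasis K b c ik = b ik.1 ⊗ₜ c ik.2 := by
  refine (boxBasis K b c).repr.injective ?_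
  rw [Module.Basis.repr_self]
  change _ = finsuppTensorFinsupp K K Λ Γ ι κ (b.repr (b ik.1) ⊗ₜ c.repr (c ik.2))
  simp [Algebra.TensorProduct.one_def, finsuppTensorFinsupp_single]

include b c in
theorem boxHomMap_bijective_of_basis [Finite ι] [Finite κ] :
    Function.Bijective (boxHomMap K Λ Γ M N M' N') := by
  let e := (TensorProduct.congr (b.constr K) (c.constr K)).symm ≪≫ₗ
    funTensorFunEquiv K N N' ι κ ≪≫ₗ (boxBasis K b c).constr K
  suffices boxHomMap K Λ Γ M N M' N' = e.toLinearMap by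
    rw [this]
    exact e.bijective
  refine TensorProduct.ext' fun f g => (boxBasis K b c).ext fun ik => ?_
  obtain ⟨v, rfl⟩ := (b.constr K).surjective f
  obtain ⟨w, rfl⟩ := (c.constr K).surjective g
  calc boxMap K (b.constr K v) (c.constr K w) (boxBasis K b c ik)
    _ = v ik.1 ⊗ₜ w ik.2 := by
      rw [boxBasis_apply, boxMap_tmul, b.constr_basis, c.constr_basis]
    _ = e (b.constr K v ⊗ₜ c.constr K w) (boxBasis K b c ik) := by
      simp [e, Module.Basis.constr_basis, funTensorFunEquiv_tmul]

end Basis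

end BoxMap

section BoxTensor

open scoped ModuleCat

variable {K Λ Γ : Type u} [Field K] [Ring Λ] [Ring Γ] [Algebra K Λ] [Algebra K Γ]

variable (K) in
/-- The tensor product over `K`, as a bifunctor from `Λ`-modules and `Γ`-modules to
`Λ ⊗ Γ`-modules. -/
noncomputable def boxTensor :
    ModuleCat.{u} Λ ⥤ ModuleCat.{u} Γ ⥤ ModuleCat.{u} (Λ ⊗[K] Γ) where
  obj X :=
    { obj X' := ModuleCat.of (Λ ⊗[K] Γ) (X ⊗[K] X')
      map g := ModuleCat.ofHom (boxMap K LinearMap.id g.hom)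
      map_id _ := ModuleCat.hom_ext (box_hom_ext fun _ _ => rfl)
      map_comp _ _ := ModuleCat.hom_ext (box_hom_ext fun _ _ => rfl) }
  map f :=
    { app _ := ModuleCat.ofHom (boxMap K f.hom LinearMap.id)
      naturality _ _ _ := ModuleCat.hom_ext (box_hom_ext fun _ _ => rfl) }
  map_id _ := NatTrans.ext (funext fun _ => ModuleCat.hom_ext (box_hom_ext fun _ _ => rfl))
  map_comp _ _ := NatTrans.ext (funext fun _ => ModuleCat.hom_ext (box_hom_ext fun _ _ => rfl))

instance (X : ModuleCat.{u} Λ) : ((boxTensor K (Γ := Γ)).obj X).Additive where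
  map_add := ModuleCat.hom_ext (box_hom_ext fun _ _ => tmul_add _ _ _)

instance (X' : ModuleCat.{u} Γ) : ((boxTensor K (Λ := Λ)).flip.obj X').Additive where
  map_add := ModuleCat.hom_ext (box_hom_ext fun _ _ => add_tmul _ _ _)

instance (X : ModuleCat.{u} Λ) : ((boxTensor K (Γ := Γ)).obj X).Linear K where
  map_smul _ r := ModuleCat.hom_ext <| box_hom_ext fun _ _ =>
    (tmul_smul r _ _).trans (algebraMap_smul (Λ ⊗[K] Γ) r _).symm

instance (X' : ModuleCat.{u} Γ) : ((boxTensor K (Λ := Λ)).flip.obj X').Linear K where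
  map_smul _ r := ModuleCat.hom_ext <| box_hom_ext fun _ _ =>
    (smul_tmul' r _ _).symm.trans (algebraMap_smul (Λ ⊗[K] Γ) r _).symm

lemma boxTensor_obj_exact (X : ModuleCat.{u} Λ) :
    PreservesFiniteLimits ((boxTensor K (Γ := Γ)).obj X) ∧
      PreservesFiniteColimits ((boxTensor K (Γ := Γ)).obj X) := by
  refine ((Functor.exact_tfae _).out 0 3).1 fun S hS => ModuleCat.shortComplex_shortExact _ ?_ ?_ ?_
  · exact lTensor_exact X (f := S.f.hom.restrictScalars K) (g := S.g.hom.restrictScalars K)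
      ((ShortComplex.ShortExact.moduleCat_exact_iff_function_exact _).1 hS.exact)
      hS.moduleCat_surjective_g
  · exact Module.Flat.lTensor_preserves_injective_linearMap (S.f.hom.restrictScalars K)
      hS.moduleCat_injective_f
  · exact LinearMap.lTensor_surjective X (g := S.g.hom.restrictScalars K) hS.moduleCat_surjective_g

lemma boxTensor_flip_obj_exact (X' : ModuleCat.{u} Γ) :
    PreservesFiniteLimits ((boxTensor K (Λ := Λ)).flip.obj X') ∧
      PreservesFiniteColimits ((boxTensor K (Λ := Λ)).flip.obj X') := by
  refine ((Functor.exact_tfae _).out 0 3).1 fun S hS => ModuleCat.shortComplex_shortExact _ ?_ ?_ ?_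
  · exact rTensor_exact X' (f := S.f.hom.restrictScalars K) (g := S.g.hom.restrictScalars K)
      ((ShortComplex.ShortExact.moduleCat_exact_iff_function_exact _).1 hS.exact)
      hS.moduleCat_surjective_g
  · exact Module.Flat.rTensor_preserves_injective_linearMap (S.f.hom.restrictScalars K)
      hS.moduleCat_injective_f
  · exact LinearMap.rTensor_surjective X' (g := S.g.hom.restrictScalars K) hS.moduleCat_surjective_g

instance (X : ModuleCat.{u} Λ) : PreservesFiniteLimits ((boxTensor K (Γ := Γ)).obj X) :=
  (boxTensor_obj_exact X).1

instance (X : ModuleCat.{u} Λ) : PreservesFiniteColimits ((boxTensor K (Γ := Γ)).obj X) :=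
  (boxTensor_obj_exact X).2

instance (X' : ModuleCat.{u} Γ) : PreservesFiniteLimits ((boxTensor K (Λ := Λ)).flip.obj X') :=
  (boxTensor_flip_obj_exact X').1

instance (X' : ModuleCat.{u} Γ) : PreservesFiniteColimits ((boxTensor K (Λ := Λ)).flip.obj X') :=
  (boxTensor_flip_obj_exact X').2

variable (K) in
/-- `Ext⁰` of modules over a `K`-algebra is `Hom`. -/
noncomputable def extZeroEquiv {A : Type u} [Ring A] [Algebra K A] (X Y : ModuleCat.{u} A) :
    Ext X Y 0 ≃ₗ[K] (X →ₗ[A] Y) :=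
  Ext.linearEquiv₀ ≪≫ₗ
    { ModuleCat.homAddEquiv with map_smul' r _ := LinearMap.ext fun _ => algebraMap_smul A r _ }

lemma crossProduct_boxTensor_mk₀ {X Y : ModuleCat.{u} Λ} {X' Y' : ModuleCat.{u} Γ} (f : X ⟶ Y)
    (g : X' ⟶ Y') :
    crossProduct K (boxTensor K) X Y X' Y' (zero_add 0) (Ext.mk₀ f ⊗ₜ Ext.mk₀ g) =
      Ext.mk₀ (ModuleCat.ofHom (boxMap K f.hom g.hom)) := by
  simp only [crossProduct_tmul, Ext.mapExactFunctor_mk₀, Ext.mk₀_comp_mk₀]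
  exact congrArg Ext.mk₀ (ModuleCat.hom_ext (box_hom_ext fun _ _ => rfl))

lemma crossProduct_boxTensor_extZeroEquiv_symm {X Y : ModuleCat.{u} Λ} {X' Y' : ModuleCat.{u} Γ}
    (x : (X →ₗ[Λ] Y) ⊗[K] (X' →ₗ[Γ] Y')) :
    crossProduct K (boxTensor K) X Y X' Y' (zero_add 0)
        ((TensorProduct.congr (extZeroEquiv K X Y) (extZeroEquiv K X' Y')).symm x) =
      Ext.mk₀ (ModuleCat.ofHom (boxHomMap K Λ Γ X Y X' Y' x)) := by
  induction x with
  | zero =>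
    simp only [map_zero, ModuleCat.ofHom_zero, Ext.mk₀_zero]
    rfl
  | add x y hx hy =>
    simp only [map_add, hx, hy, ModuleCat.ofHom_add, Ext.mk₀_add]
    rfl
  | tmul f g => exact crossProduct_boxTensor_mk₀ (ModuleCat.ofHom f) (ModuleCat.ofHom g)

theorem crossProduct_boxTensor_bijective_of_basis {X Y : ModuleCat.{u} Λ} {X' Y' : ModuleCat.{u} Γ}
    {ι κ : Type*} [Finite ι] [Finite κ] (b : Module.Basis ι Λ X) (c : Module.Basis κ Γ X') :
    Function.Bijective (crossProduct K (boxTensor K) X Y X' Y' (zero_add 0)) := by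
  let e := (TensorProduct.congr (extZeroEquiv K X Y) (extZeroEquiv K X' Y')).symm
  have crossProduct_comp_e : crossProduct K (boxTensor K) X Y X' Y' (zero_add 0) ∘ e =
      Ext.mk₀ ∘ ModuleCat.ofHom ∘ boxHomMap K Λ Γ X Y X' Y' :=
    funext crossProduct_boxTensor_extZeroEquiv_symm
  rw [← Function.Bijective.of_comp_iff _ e.bijective, crossProduct_comp_e]
  have ofHom_bijective : Function.Bijective
      (ModuleCat.ofHom : (X ⊗[K] X' →ₗ[Λ ⊗[K] Γ] Y ⊗[K] Y') → _) :=
    (ModuleCat.homEquiv (M := .of _ (X ⊗[K] X')) (N := .of _ (Y ⊗[K] Y'))).symm.bijective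
  exact (Ext.mk₀_bijective _ _).comp (ofHom_bijective.comp (boxHomMap_bijective_of_basis b c))

lemma projective_boxTensor_of_basis {X : ModuleCat.{u} Λ} {X' : ModuleCat.{u} Γ} {ι κ : Type*}
    (b : Module.Basis ι Λ X) (c : Module.Basis κ Γ X') :
    Projective (((boxTensor K).obj X).obj X') :=
  have := Module.Projective.of_basis (boxBasis K b c)
  ModuleCat.projective_of_categoryTheory_projective (ModuleCat.of (Λ ⊗[K] Γ) (X ⊗[K] X'))

/-- Finitely generated free modules. -/
def finiteFreeModules (A : Type u) [Ring A] : ObjectProperty (ModuleCat.{u} A) :=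
  fun X => ∃ n : ℕ, Nonempty (Module.Basis (Fin n) A X)

lemma hasPresentations_isFG (A : Type u) [Ring A] [IsNoetherianRing A] :
    HasPresentations (ModuleCat.isFG A) (finiteFreeModules A) := by
  intro X hX
  have : Module.Finite A X := hX
  obtain ⟨n, f, hf⟩ := Module.Finite.exists_fin' A X
  exact ⟨f.shortComplexKer, LinearMap.shortExact_shortComplexKer hf, rfl,
    inferInstanceAs (Module.Finite A (LinearMap.ker f)), n, ⟨Pi.basisFun A (Fin n)⟩⟩

lemma projective_of_finiteFreeModules {A : Type u} [Ring A] (X : ModuleCat.{u} A)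
    (hX : finiteFreeModules A X) : Projective X := by
  obtain ⟨n, ⟨b⟩⟩ := hX
  have := Module.Projective.of_basis b
  exact X.projective_of_categoryTheory_projective

theorem kunnethMap_boxTensor_bijective [IsNoetherianRing Λ] [IsNoetherianRing Γ]
    (X Y : ModuleCat.{u} Λ) (X' Y' : ModuleCat.{u} Γ) [hX : Module.Finite Λ X]
    [hX' : Module.Finite Γ X'] (p : ℕ) :
    Function.Bijective (kunnethMap K (boxTensor K) X Y X' Y' p) := by
  refine kunnethMap_bijective (boxTensor K)
    (hasPresentations_isFG Λ) projective_of_finiteFreeModules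
    (hasPresentations_isFG Γ) projective_of_finiteFreeModules ?_ ?_ hX' p X hX
  · rintro Q Q' ⟨_, ⟨b⟩⟩ ⟨_, ⟨c⟩⟩
    exact projective_boxTensor_of_basis b c
  · rintro Q Q' ⟨_, ⟨b⟩⟩ ⟨_, ⟨c⟩⟩
    exact crossProduct_boxTensor_bijective_of_basis b c

end BoxTensor

open Finset.HasAntidiagonal (antidiagonal) in
/-- A family over the pairs `i + j = p`, as a direct sum over `i ≤ p`. -/
noncomputable def piAntidiagonalEquiv (R : Type*) [Semiring R] (V : ℕ → ℕ → Type*)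
    [∀ i j, AddCommMonoid (V i j)] [∀ i j, Module R (V i j)] (p : ℕ) :
    (∀ ij : antidiagonal p, V ij.1.1 ij.1.2) ≃ₗ[R]
      DirectSum (Fin (p + 1)) fun i => V i (p - i) :=
  LinearEquiv.piCongrLeft' R _ (Finset.Nat.antidiagonalEquivFin p) ≪≫ₗ
    (DirectSum.linearEquivFunOnFintype R (Fin (p + 1)) fun i => V i (p - i)).symm

lemma module_eq_moduleOfAlgebraModule {K A V : Type*} [Field K] [Ring A] [Algebra K A]
    [AddCommGroup V] [inst : Module K V] [Module A V] [IsScalarTower K A V] :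
    inst = ModuleCat.moduleOfAlgebraModule (ModuleCat.of A V) :=
  Module.ext' _ _ fun r x => algebra_compatible_smul A r x

end ExtKunneth

open TensorProduct DirectSum ExtKunneth in
theorem ext_tensorProduct_kunneth_general
    (K Λ Γ M N M' N' : Type u) [Field K] [Ring Λ] [Ring Γ]
    [Algebra K Λ] [Algebra K Γ] [IsNoetherianRing Λ] [IsNoetherianRing Γ]
    [AddCommGroup M] [Module K M] [Module Λ M] [IsScalarTower K Λ M] [Module.Finite Λ M]
    [AddCommGroup N] [Module K N] [Module Λ N] [IsScalarTower K Λ N]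
    [AddCommGroup M'] [Module K M'] [Module Γ M'] [IsScalarTower K Γ M'] [Module.Finite Γ M']
    [AddCommGroup N'] [Module K N'] [Module Γ N'] [IsScalarTower K Γ N']
    (p : ℕ) :
    Nonempty ((extGrp K (Λ ⊗[K] Γ) p (M ⊗[K] M') (N ⊗[K] N')) ≃ₗ[K]
      (⨁ i : Fin (p + 1),
        ((extGrp K Λ (i : ℕ) M N) ⊗[K] (extGrp K Γ (p - (i : ℕ)) M' N')))) := by
  obtain rfl := module_eq_moduleOfAlgebraModule (K := K) (A := Λ) (V := M)
  obtain rfl := module_eq_moduleOfAlgebraModule (K := K) (A := Λ) (V := N)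
  obtain rfl := module_eq_moduleOfAlgebraModule (K := K) (A := Γ) (V := M')
  obtain rfl := module_eq_moduleOfAlgebraModule (K := K) (A := Γ) (V := N')
  let kunnethEquiv := LinearEquiv.ofBijective _ <| kunnethMap_boxTensor_bijective (K := K)
    (ModuleCat.of Λ M) (ModuleCat.of Λ N) (ModuleCat.of Γ M') (ModuleCat.of Γ N') p
  exact ⟨derivedExtEquiv K _ _ p ≪≫ₗ kunnethEquiv.symm ≪≫ₗ
    LinearEquiv.piCongrRight (fun _ => TensorProduct.congr
      (derivedExtEquiv K _ _ _).symm (derivedExtEquiv K _ _ _).symm) ≪≫ₗ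
    piAntidiagonalEquiv K (fun i j => extGrp K Λ i M N ⊗[K] extGrp K Γ j M' N') p⟩

open TensorProduct DirectSum in
/-- **Künneth formula for Ext.** For finite dimensional algebras `Λ`, `Γ` over
a field `K` and finitely generated modules `M, N` over `Λ`, `M', N'` over `Γ`, for every
`p ≥ 0` there is a `K`-linear isomorphism
`Ext^p_{Λ⊗Γ}(M⊗M', N⊗N') ≅ ⨁_{i+j=p} Ext^i_Λ(M,N) ⊗ Ext^j_Γ(M',N')`. -/
theorem ext_tensorProduct_kunneth
    (K Λ Γ M N M' N' : Type u) [Field K] [Ring Λ] [Ring Γ]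
    [Algebra K Λ] [Algebra K Γ] [FiniteDimensional K Λ] [FiniteDimensional K Γ]
    [AddCommGroup M] [Module K M] [Module Λ M] [IsScalarTower K Λ M] [Module.Finite Λ M]
    [AddCommGroup N] [Module K N] [Module Λ N] [IsScalarTower K Λ N] [Module.Finite Λ N]
    [AddCommGroup M'] [Module K M'] [Module Γ M'] [IsScalarTower K Γ M'] [Module.Finite Γ M']
    [AddCommGroup N'] [Module K N'] [Module Γ N'] [IsScalarTower K Γ N'] [Module.Finite Γ N']
    (p : ℕ) :
    Nonempty ((extGrp K (Λ ⊗[K] Γ) p (M ⊗[K] M') (N ⊗[K] N')) ≃ₗ[K]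
      (⨁ i : Fin (p + 1),
        ((extGrp K Λ (i : ℕ) M N) ⊗[K] (extGrp K Γ (p - (i : ℕ)) M' N')))) := by
  have := IsNoetherianRing.of_finite K Λ
  have := IsNoetherianRing.of_finite K Γ
  exact ext_tensorProduct_kunneth_general K Λ Γ M N M' N' p
end

section
/- Let Λ and Γ be finite dimensional algebras over a field K and n, m ≥ 1, let M be a finitely generated left Λ-module and N a finitely generated left Γ-module. (1) If the injective dimension of M over Λ equals n and the injective dimension of N over Γ equals m, then the injective dimension of M⊗N over Λ⊗Γ equals n+m. (2) If the projective dimension of M over Λ equals n and the projective dimension of N over Γ equals m, then the projective dimension of M⊗N over Λ⊗Γ equals n+m. -/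
open TensorProduct

universe u

open CategoryTheory

/-- The projective dimension of the `A`-module `X` equals `n`, expressed via vanishing and
non-vanishing of Ext groups: `Ext^q(X, -) = 0` for all `q > n` and `Ext^n(X, L) ≠ 0` for
some module `L`. -/
noncomputable def ProjDimEq (K : Type u) [Field K] (A : Type u) [Ring A] [Algebra K A]
    (X : Type u) [AddCommGroup X] [Module A X] (n : ℕ) : Prop :=
  (∀ (L : ModuleCat.{u} A) (q : ℕ), n < q →
      Subsingleton
        (((_root_.Ext K (ModuleCat.{u} A) q).obj (Opposite.op (ModuleCat.of A X))).obj L)) ∧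
    ∃ L : ModuleCat.{u} A, ¬ Subsingleton
      (((_root_.Ext K (ModuleCat.{u} A) n).obj (Opposite.op (ModuleCat.of A X))).obj L)

/-- The injective dimension of the `A`-module `X` equals `n`, expressed via vanishing and
non-vanishing of Ext groups: `Ext^q(-, X) = 0` for all `q > n` and `Ext^n(L, X) ≠ 0` for
some module `L`. -/
noncomputable def InjDimEq (K : Type u) [Field K] (A : Type u) [Ring A] [Algebra K A]
    (X : Type u) [AddCommGroup X] [Module A X] (n : ℕ) : Prop :=
  (∀ (L : ModuleCat.{u} A) (q : ℕ), n < q →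
      Subsingleton
        (((_root_.Ext K (ModuleCat.{u} A) q).obj (Opposite.op L)).obj (ModuleCat.of A X))) ∧
    ∃ L : ModuleCat.{u} A, ¬ Subsingleton
      (((_root_.Ext K (ModuleCat.{u} A) n).obj (Opposite.op L)).obj (ModuleCat.of A X))

/-!
Tensoring over `K` is exact in each variable and preserves projectives, and also injectives when
`Λ` and the `Λ`-module are finite dimensional. Dimension shifting along syzygies (cosyzygies) thus
bounds the dimension of `M ⊗ N` by `n + m` and reduces the strictness of this bound to the case
`n = m = 1`.

Suppose in that case that `M ⊗ N` has projective dimension at most `1`. Let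
`0 → ΩM → P → M → 0` and `0 → ΩN → Q → N → 0` be presentations with inclusions `d` and `g`. The
class of `ΩM ⊗ (0 → ΩN → Q → N → 0)` in `Ext¹(ΩM ⊗ N, ΩM ⊗ ΩN)` extends to `Ext¹(P ⊗ N, ΩM ⊗ ΩN)`
since `Ext²(M ⊗ N, ΩM ⊗ ΩN) = 0`, which yields maps `r`, `s` with
`r ∘ (d ⊗ 1) + s ∘ (1 ⊗ g) = 1`. If `g` does not split, some functional `ω` on `Hom_Γ(ΩN, ΩN)` has
`ω 1 = 1` and vanishes on every `ρ ∘ g`; contracting the identity along `ω` exhibits a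
retraction of `d`. So `M` or `N` is projective. The injective case is dual.
-/

section AbelianCategory

open Abelian Limits

variable {C D : Type*} [Category* C] [Abelian C] [Category* D] [Abelian D]

/-- A class `R` of objects admits syzygies: every `X` in `R` sits in a short exact sequence
`0 ⟶ ΩX ⟶ P ⟶ X ⟶ 0` with `P` projective and `P`, `ΩX` again in `R`. -/
def HasSyzygies (R : ObjectProperty C) : Prop :=
  ∀ X, R X → ∃ S : ShortComplex C,
    S.ShortExact ∧ S.X₃ = X ∧ Projective S.X₂ ∧ R S.X₁ ∧ R S.X₂

/-- A class `R` of objects admits cosyzygies: every `X` in `R` sits in a short exact sequence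
`0 ⟶ X ⟶ I ⟶ ℧X ⟶ 0` with `I` injective and `I`, `℧X` again in `R`. -/
def HasCosyzygies (R : ObjectProperty C) : Prop :=
  ∀ X, R X → ∃ S : ShortComplex C,
    S.ShortExact ∧ S.X₁ = X ∧ Injective S.X₂ ∧ R S.X₂ ∧ R S.X₃

lemma hasSyzygies_top [EnoughProjectives C] : HasSyzygies (⊤ : ObjectProperty C) := fun X _ ↦
  ⟨.mk (kernel.ι (Projective.π X)) (Projective.π X) (kernel.condition _),
    { exact := ShortComplex.exact_kernel _ }, rfl, inferInstance, trivial, trivial⟩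

lemma hasCosyzygies_top [EnoughInjectives C] : HasCosyzygies (⊤ : ObjectProperty C) := fun X _ ↦
  ⟨.mk (Injective.ι X) (cokernel.π (Injective.ι X)) (cokernel.condition _),
    { exact := ShortComplex.exact_cokernel _ }, rfl, inferInstance, trivial, trivial⟩

lemma hasProjectiveDimensionLE_of_le {X : C} {a b : ℕ} (hX : HasProjectiveDimensionLE X a)
    (hab : a ≤ b) : HasProjectiveDimensionLE X b :=
  hasProjectiveDimensionLT_of_ge X (a + 1) (b + 1) (by lia)

lemma hasInjectiveDimensionLE_of_le {X : C} {a b : ℕ} (hX : HasInjectiveDimensionLE X a)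
    (hab : a ≤ b) : HasInjectiveDimensionLE X b :=
  hasInjectiveDimensionLT_of_ge X (a + 1) (b + 1) (by lia)

section ExactFunctor

variable {F : C ⥤ D} [F.PreservesZeroMorphisms]
  (hF : ∀ S : ShortComplex C, S.ShortExact → (S.map F).ShortExact)
  {R : ObjectProperty C} {a : ℕ}
include hF

lemma hasProjectiveDimensionLE_obj (hR : HasSyzygies R)
    (hproj : ∀ P, R P → Projective P → HasProjectiveDimensionLE (F.obj P) a) (b : ℕ) (X : C)
    (hX : R X) (hXb : HasProjectiveDimensionLE X b) :
    HasProjectiveDimensionLE (F.obj X) (a + b) := by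
  induction b generalizing X with
  | zero => exact hproj X hX ((projective_iff_hasProjectiveDimensionLE_zero X).2 hXb)
  | succ b ih =>
    obtain ⟨S, hS, rfl, hP, hRΩ, hRP⟩ := hR X hX
    have hΩ : HasProjectiveDimensionLE S.X₁ b := (hS.hasProjectiveDimensionLT_X₃_iff b hP).1 hXb
    exact (hF S hS).hasProjectiveDimensionLT_X₃ _ (ih _ hRΩ hΩ)
      (hasProjectiveDimensionLE_of_le (hproj _ hRP hP) (by lia))

lemma not_hasProjectiveDimensionLE_obj (hR : HasSyzygies R)
    (hproj : ∀ P, R P → Projective P → HasProjectiveDimensionLE (F.obj P) a)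
    (hone : ∀ X, R X → HasProjectiveDimensionLE X 1 → ¬ Projective X →
      ¬ HasProjectiveDimensionLE (F.obj X) a)
    (b : ℕ) (X : C) (hX : R X) (hXb : HasProjectiveDimensionLE X (b + 1))
    (hXb' : ¬ HasProjectiveDimensionLE X b) : ¬ HasProjectiveDimensionLE (F.obj X) (a + b) := by
  induction b generalizing X with
  | zero =>
    exact hone X hX hXb fun h ↦ hXb' ((projective_iff_hasProjectiveDimensionLE_zero X).1 h)
  | succ b ih =>
    obtain ⟨S, hS, rfl, hP, hRΩ, hRP⟩ := hR X hX
    rw [HasProjectiveDimensionLE, hS.hasProjectiveDimensionLT_X₃_iff _ hP] at hXb hXb'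
    exact fun h ↦ ih S.X₁ hRΩ hXb hXb' <| (hF S hS).hasProjectiveDimensionLT_X₁ _
      (hasProjectiveDimensionLE_of_le (hproj _ hRP hP) (by lia)) h

lemma hasInjectiveDimensionLE_obj (hR : HasCosyzygies R)
    (hinj : ∀ I, R I → Injective I → HasInjectiveDimensionLE (F.obj I) a) (b : ℕ) (X : C)
    (hX : R X) (hXb : HasInjectiveDimensionLE X b) :
    HasInjectiveDimensionLE (F.obj X) (a + b) := by
  induction b generalizing X with
  | zero => exact hinj X hX (injective_iff_hasInjectiveDimensionLT_one.2 hXb)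
  | succ b ih =>
    obtain ⟨S, hS, rfl, hI, hRI, hRΩ⟩ := hR X hX
    have hΩ : HasInjectiveDimensionLE S.X₃ b := (hS.hasInjectiveDimensionLT_X₃_iff b hI).2 hXb
    exact (hF S hS).hasInjectiveDimensionLT_X₁ _ (ih _ hRΩ hΩ)
      (hasInjectiveDimensionLE_of_le (hinj _ hRI hI) (by lia))

lemma not_hasInjectiveDimensionLE_obj (hR : HasCosyzygies R)
    (hinj : ∀ I, R I → Injective I → HasInjectiveDimensionLE (F.obj I) a)
    (hone : ∀ X, R X → HasInjectiveDimensionLE X 1 → ¬ Injective X →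
      ¬ HasInjectiveDimensionLE (F.obj X) a)
    (b : ℕ) (X : C) (hX : R X) (hXb : HasInjectiveDimensionLE X (b + 1))
    (hXb' : ¬ HasInjectiveDimensionLE X b) : ¬ HasInjectiveDimensionLE (F.obj X) (a + b) := by
  induction b generalizing X with
  | zero =>
    exact hone X hX hXb fun h ↦ hXb' (injective_iff_hasInjectiveDimensionLT_one.1 h)
  | succ b ih =>
    obtain ⟨S, hS, rfl, hI, hRI, hRΩ⟩ := hR X hX
    rw [HasInjectiveDimensionLE, ← hS.hasInjectiveDimensionLT_X₃_iff _ hI] at hXb hXb'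
    exact fun h ↦ ih S.X₃ hRΩ hXb hXb' <| (hF S hS).hasInjectiveDimensionLT_X₃ _
      (hasInjectiveDimensionLE_of_le (hinj _ hRI hI) (by lia)) h

end ExactFunctor

lemma projective_X₃_of_retraction {S : ShortComplex C} (hS : S.ShortExact) [Projective S.X₂]
    (ρ : S.X₂ ⟶ S.X₁) (hρ : S.f ≫ ρ = 𝟙 _) : Projective S.X₃ :=
  have := hS.epi_g
  let σ := ShortComplex.Splitting.ofExactOfRetraction S hS.exact ρ hρ inferInstance
  Retract.projective ⟨σ.s, S.g, σ.s_g⟩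

lemma injective_X₁_of_section {S : ShortComplex C} (hS : S.ShortExact) [Injective S.X₂]
    (σ : S.X₃ ⟶ S.X₂) (hσ : σ ≫ S.g = 𝟙 _) : Injective S.X₁ :=
  have := hS.mono_f
  let τ := ShortComplex.Splitting.ofExactOfSection S hS.exact σ hσ inferInstance
  Retract.injective ⟨S.f, τ.r, τ.f_r⟩

lemma exists_homotopy_of_hasProjectiveDimensionLE_one {S T : ShortComplex C} (hS : S.ShortExact)
    (hT : T.ShortExact) [Projective T.X₂] (φ : S ⟶ T) {Z : C} {g : T.X₃ ⟶ Z} {w : φ.τ₃ ≫ g = 0}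
    (hZ : (ShortComplex.mk φ.τ₃ g w).ShortExact) (hdim : HasProjectiveDimensionLE Z 1) :
    ∃ (r : T.X₁ ⟶ S.X₁) (s : S.X₂ ⟶ S.X₁), φ.τ₁ ≫ r + S.f ≫ s = 𝟙 S.X₁ := by
  let := HasExt.standard C
  obtain ⟨y, hy⟩ : ∃ y : Ext T.X₃ S.X₁ 1, (Ext.mk₀ φ.τ₃).comp y (zero_add 1) = hS.extClass :=
    Ext.contravariant_sequence_exact₁ hZ _ hS.extClass (n₁ := 2) rfl
      (Ext.eq_zero_of_hasProjectiveDimensionLT _ 2 le_rfl)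
  obtain ⟨r, rfl⟩ : ∃ r : T.X₁ ⟶ S.X₁, hT.extClass.comp (Ext.mk₀ r) (add_zero 1) = y := by
    obtain ⟨r', hr'⟩ := Ext.contravariant_sequence_exact₃ hT _ y (n₀ := 0)
      (Ext.eq_zero_of_projective _) rfl
    obtain ⟨r, rfl⟩ := (Ext.mk₀_bijective _ _).2 r'
    exact ⟨r, hr'⟩
  have hfix : hS.extClass.comp (Ext.mk₀ (φ.τ₁ ≫ r)) (add_zero 1) = hS.extClass := by
    rw [← Ext.mk₀_comp_mk₀, ← Ext.comp_assoc_of_third_deg_zero,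
      ShortComplex.ShortExact.extClass_naturality hS hT φ, Ext.comp_assoc_of_third_deg_zero, hy]
  have hzero : hS.extClass.comp (Ext.mk₀ (𝟙 _ - φ.τ₁ ≫ r)) (add_zero 1) = 0 := by
    rw [sub_eq_add_neg, Ext.mk₀_add, Ext.comp_add, Ext.mk₀_neg, Ext.comp_neg, Ext.comp_mk₀_id,
      hfix, add_neg_cancel]
  obtain ⟨s', hs'⟩ := Ext.contravariant_sequence_exact₁ hS _ _ rfl hzero
  obtain ⟨s, rfl⟩ := (Ext.mk₀_bijective _ _).2 s'
  rw [Ext.mk₀_comp_mk₀] at hs'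
  exact ⟨r, s, by rw [(Ext.mk₀_bijective _ _).1 hs', add_sub_cancel]⟩

lemma exists_homotopy_of_hasInjectiveDimensionLE_one {S T : ShortComplex C} (hS : S.ShortExact)
    (hT : T.ShortExact) [Injective T.X₂] (φ : T ⟶ S) {Z : C} {g : Z ⟶ T.X₁} {w : g ≫ φ.τ₁ = 0}
    (hZ : (ShortComplex.mk g φ.τ₁ w).ShortExact) (hdim : HasInjectiveDimensionLE Z 1) :
    ∃ (r : S.X₃ ⟶ T.X₃) (s : S.X₃ ⟶ S.X₂), r ≫ φ.τ₃ + s ≫ S.g = 𝟙 S.X₃ := by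
  let := HasExt.standard C
  obtain ⟨y, hy⟩ : ∃ y : Ext S.X₃ T.X₁ 1, y.comp (Ext.mk₀ φ.τ₁) (add_zero 1) = hS.extClass :=
    Ext.covariant_sequence_exact₃ _ hZ hS.extClass (n₁ := 2) rfl
      (Ext.eq_zero_of_hasInjectiveDimensionLT _ 2 le_rfl)
  obtain ⟨r, rfl⟩ : ∃ r : S.X₃ ⟶ T.X₃, (Ext.mk₀ r).comp hT.extClass (zero_add 1) = y := by
    obtain ⟨r', hr'⟩ := Ext.covariant_sequence_exact₁ _ hT y (n₀ := 0)
      (Ext.eq_zero_of_injective _) rfl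
    obtain ⟨r, rfl⟩ := (Ext.mk₀_bijective _ _).2 r'
    exact ⟨r, hr'⟩
  have hfix : (Ext.mk₀ (r ≫ φ.τ₃)).comp hS.extClass (zero_add 1) = hS.extClass := by
    rw [← Ext.mk₀_comp_mk₀, Ext.comp_assoc_of_second_deg_zero,
      ← ShortComplex.ShortExact.extClass_naturality hT hS φ,
      ← Ext.comp_assoc_of_third_deg_zero, hy]
  have hzero : (Ext.mk₀ (𝟙 _ - r ≫ φ.τ₃)).comp hS.extClass (zero_add 1) = 0 := by
    rw [sub_eq_add_neg, Ext.mk₀_add, Ext.add_comp, Ext.mk₀_neg, Ext.neg_comp, Ext.mk₀_id_comp,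
      hfix, add_neg_cancel]
  obtain ⟨s', hs'⟩ := Ext.covariant_sequence_exact₃ _ hS _ rfl hzero
  obtain ⟨s, rfl⟩ := (Ext.mk₀_bijective _ _).2 s'
  rw [Ext.mk₀_comp_mk₀] at hs'
  exact ⟨r, s, by rw [(Ext.mk₀_bijective _ _).1 hs', add_sub_cancel]⟩

end AbelianCategory

section ExtComparison

variable (K : Type u) [Field K] {A : Type u} [Ring A] [Algebra K A]

lemma subsingleton_rootExt_succ_iff (X L : ModuleCat.{u} A) (n : ℕ) :
    Subsingleton (((_root_.Ext K (ModuleCat.{u} A) (n + 1)).obj (Opposite.op X)).obj L) ↔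
      Subsingleton (Abelian.Ext.{u} X L (n + 1)) := by
  let P := projectiveResolution X
  -- Both sides say that every `(n + 1)`-cocycle of `Hom(P, L)` is a coboundary.
  trans ∀ f : P.complex.X (n + 1) ⟶ L, P.complex.d (n + 2) (n + 1) ≫ f = 0 →
    ∃ g : P.complex.X n ⟶ L, P.complex.d (n + 1) n ≫ g = f
  · rw [← ModuleCat.isZero_iff_subsingleton, (P.isoExt (R := K) (n + 1) L).isZero_iff,
      ← HomologicalComplex.exactAt_iff_isZero_homology,
      HomologicalComplex.exactAt_iff' _ n (n + 1) (n + 2) (by simp) (by simp),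
      ShortComplex.moduleCat_exact_iff]
    rfl
  · rw [subsingleton_iff_forall_eq 0]
    refine ⟨fun h α ↦ ?_, fun h f hf ↦ (P.extMk_eq_zero_iff f (n + 2) rfl hf n rfl).1 (h _)⟩
    obtain ⟨f, hf, rfl⟩ := P.extMk_surjective α (n + 2) rfl
    exact (P.extMk_eq_zero_iff f (n + 2) rfl hf n rfl).2 (h f hf)

lemma hasProjectiveDimensionLE_iff_rootExt (X : ModuleCat.{u} A) (n : ℕ) :
    HasProjectiveDimensionLE X n ↔ ∀ L : ModuleCat.{u} A, Subsingleton
      (((_root_.Ext K (ModuleCat.{u} A) (n + 1)).obj (Opposite.op X)).obj L) := by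
  simp only [subsingleton_rootExt_succ_iff]
  exact ⟨fun _ ↦ HasProjectiveDimensionLT.subsingleton X (n + 1) _ le_rfl,
    hasProjectiveDimensionLT_of_enoughInjectives X (n + 1)⟩

lemma hasInjectiveDimensionLE_iff_rootExt (X : ModuleCat.{u} A) (n : ℕ) :
    HasInjectiveDimensionLE X n ↔ ∀ L : ModuleCat.{u} A, Subsingleton
      (((_root_.Ext K (ModuleCat.{u} A) (n + 1)).obj (Opposite.op L)).obj X) := by
  simp only [subsingleton_rootExt_succ_iff]
  exact ⟨fun _ ↦ HasInjectiveDimensionLT.subsingleton X (n + 1) _ le_rfl,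
    hasInjectiveDimensionLT_of_enoughProjectives X (n + 1)⟩

lemma projDimEq_succ_iff {X : Type u} [AddCommGroup X] [Module A X] (n : ℕ) :
    ProjDimEq K A X (n + 1) ↔ HasProjectiveDimensionLE (ModuleCat.of A X) (n + 1) ∧
      ¬ HasProjectiveDimensionLE (ModuleCat.of A X) n := by
  rw [ProjDimEq, hasProjectiveDimensionLE_iff_rootExt K _ n, not_forall]
  refine and_congr_left' ⟨fun h ↦ (hasProjectiveDimensionLE_iff_rootExt K _ _).2
    fun L ↦ h L _ (by lia), fun h L q hq ↦ ?_⟩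
  obtain ⟨q, rfl⟩ := Nat.exists_eq_succ_of_ne_zero (Nat.ne_zero_of_lt hq)
  exact (hasProjectiveDimensionLE_iff_rootExt K _ q).1
    (hasProjectiveDimensionLE_of_le h (by lia)) L

lemma injDimEq_succ_iff {X : Type u} [AddCommGroup X] [Module A X] (n : ℕ) :
    InjDimEq K A X (n + 1) ↔ HasInjectiveDimensionLE (ModuleCat.of A X) (n + 1) ∧
      ¬ HasInjectiveDimensionLE (ModuleCat.of A X) n := by
  rw [InjDimEq, hasInjectiveDimensionLE_iff_rootExt K _ n, not_forall]
  refine and_congr_left' ⟨fun h ↦ (hasInjectiveDimensionLE_iff_rootExt K _ _).2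
    fun L ↦ h L _ (by lia), fun h L q hq ↦ ?_⟩
  obtain ⟨q, rfl⟩ := Nat.exists_eq_succ_of_ne_zero (Nat.ne_zero_of_lt hq)
  exact (hasInjectiveDimensionLE_iff_rootExt K _ q).1
    (hasInjectiveDimensionLE_of_le h (by lia)) L

end ExtComparison

section TensorMaps

variable {K Λ Γ : Type*} [Field K] [Ring Λ] [Ring Γ] [Algebra K Λ] [Algebra K Γ]
  {M M' M'' N N' N'' X : Type*}
  [AddCommGroup M] [Module K M] [Module Λ M] [IsScalarTower K Λ M]
  [AddCommGroup M'] [Module K M'] [Module Λ M'] [IsScalarTower K Λ M']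
  [AddCommGroup M''] [Module K M''] [Module Λ M''] [IsScalarTower K Λ M'']
  [AddCommGroup N] [Module K N] [Module Γ N] [IsScalarTower K Γ N]
  [AddCommGroup N'] [Module K N'] [Module Γ N'] [IsScalarTower K Γ N']
  [AddCommGroup N''] [Module K N''] [Module Γ N''] [IsScalarTower K Γ N'']
  [AddCommGroup X] [Module (Λ ⊗[K] Γ) X]

lemma map_smul_of_map_tmul_smul [Module K X] (φ : M ⊗[K] N →ₗ[K] X)
    (h : ∀ (a : Λ) (b : Γ) (x : M) (y : N),
      φ ((a • x) ⊗ₜ (b • y)) = (a ⊗ₜ[K] b) • φ (x ⊗ₜ y))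
    (c : Λ ⊗[K] Γ) (v : M ⊗[K] N) : φ (c • v) = c • φ v := by
  induction c with
  | zero => simp
  | add c c' hc hc' => rw [add_smul, map_add, hc, hc', add_smul]
  | tmul a b =>
    induction v with
    | zero => simp
    | add v v' hv hv' => rw [smul_add, map_add, hv, hv', map_add, smul_add]
    | tmul x y => rw [tensorTensor_smul_tmul, h]

/-- The `Λ ⊗ Γ`-linear tensor product `f ⊗ g` of a `Λ`-linear and a `Γ`-linear map. -/
noncomputable def tensorMap (f : M →ₗ[Λ] M') (g : N →ₗ[Γ] N') :
    M ⊗[K] N →ₗ[Λ ⊗[K] Γ] M' ⊗[K] N' where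
  __ := TensorProduct.map (f.restrictScalars K) (g.restrictScalars K)
  map_smul' := map_smul_of_map_tmul_smul _ fun a b x y ↦ by simp [tensorTensor_smul_tmul]

lemma tensorTensor_hom_ext {f g : M ⊗[K] N →ₗ[Λ ⊗[K] Γ] X}
    (h : ∀ x y, f (x ⊗ₜ y) = g (x ⊗ₜ y)) : f = g := by
  ext v
  induction v with
  | zero => simp
  | tmul x y => exact h x y
  | add v w hv hw => rw [map_add, map_add, hv, hw]

lemma tensorMap_id : tensorMap (LinearMap.id : M →ₗ[Λ] M) (LinearMap.id : N →ₗ[Γ] N) =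
    (LinearMap.id : M ⊗[K] N →ₗ[Λ ⊗[K] Γ] M ⊗[K] N) :=
  tensorTensor_hom_ext fun _ _ ↦ rfl

lemma tensorMap_comp (f : M →ₗ[Λ] M') (f' : M' →ₗ[Λ] M'') (g : N →ₗ[Γ] N') (g' : N' →ₗ[Γ] N'') :
    tensorMap (K := K) (f' ∘ₗ f) (g' ∘ₗ g) = tensorMap f' g' ∘ₗ tensorMap f g :=
  tensorTensor_hom_ext fun _ _ ↦ rfl

end TensorMaps

section Contraction

variable {K Λ Γ : Type*} [Field K] [Ring Λ] [Ring Γ] [Algebra K Λ] [Algebra K Γ]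
  {V V' V'' Q Q' T : Type*}
  [AddCommGroup V] [Module K V] [Module Λ V] [IsScalarTower K Λ V]
  [AddCommGroup V'] [Module K V'] [Module Λ V'] [IsScalarTower K Λ V']
  [AddCommGroup V''] [Module K V''] [Module Λ V''] [IsScalarTower K Λ V'']
  [AddCommGroup Q] [Module K Q] [Module Γ Q] [IsScalarTower K Γ Q]
  [AddCommGroup Q'] [Module K Q'] [Module Γ Q'] [IsScalarTower K Γ Q']
  [AddCommGroup T] [Module K T] [Module Γ T] [IsScalarTower K Γ T]

/-- Evaluation of the left factor at a functional: `evalLeft l (v ⊗ t) = l v • t`. -/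
noncomputable def evalLeft (l : Module.Dual K V) : V ⊗[K] T →ₗ[K] T :=
  TensorProduct.lid K T ∘ₗ LinearMap.rTensor T l

@[simp] lemma evalLeft_tmul (l : Module.Dual K V) (v : V) (t : T) :
    evalLeft l (v ⊗ₜ[K] t) = l v • t := rfl

lemma evalLeft_smul (l : Module.Dual K V) (a : Λ) (b : Γ) (x : V ⊗[K] T) :
    evalLeft l ((a ⊗ₜ[K] b) • x) = b • evalLeft (l ∘ₗ Algebra.lsmul K K V a) x := by
  induction x with
  | zero => simp
  | add x y hx hy => rw [smul_add, map_add, hx, hy, map_add, smul_add]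
  | tmul v t => rw [tensorTensor_smul_tmul, evalLeft_tmul, evalLeft_tmul, smul_comm]; rfl

lemma evalLeft_tensorMap (l : Module.Dual K V') (d : V →ₗ[Λ] V') (g : Q →ₗ[Γ] T)
    (x : V ⊗[K] Q) :
    evalLeft l (tensorMap d g x) = g (evalLeft (l ∘ₗ d.restrictScalars K) x) := by
  induction x with
  | zero => simp
  | add x y hx hy => simp only [map_add, hx, hy]
  | tmul v q => exact ((g.restrictScalars K).map_smul (l (d v)) q).symm

/-- The bilinear family of slices `q ↦ (l ⊗ 1) (φ (v ⊗ q))` of a map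
`φ : V ⊗ Q → V' ⊗ T`, indexed by `v : V` and `l : V' → K`. -/
noncomputable def slice (φ : V ⊗[K] Q →ₗ[Λ ⊗[K] Γ] V' ⊗[K] T) :
    V →ₗ[K] Module.Dual K V' →ₗ[K] Q →ₗ[Γ] T :=
  LinearMap.mk₂ K
    (fun v l ↦
      { toFun := fun q ↦ evalLeft l (φ (v ⊗ₜ q))
        map_add' := fun q q' ↦ by rw [tmul_add, map_add, map_add]
        map_smul' := fun b q ↦ by
          have hq : v ⊗ₜ[K] (b • q) = ((1 : Λ) ⊗ₜ[K] b) • v ⊗ₜ[K] q := by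
            rw [tensorTensor_smul_tmul, one_smul]
          rw [hq, map_smul, evalLeft_smul, map_one]
          rfl })
    (fun v v' l ↦ by ext q; simp [add_tmul])
    (fun k v l ↦ by
      ext q
      exact congrArg (evalLeft l) ((φ.restrictScalars K).map_smul k (v ⊗ₜ q)) |>.trans
        ((evalLeft l).map_smul k _))
    (fun v l l' ↦ by ext q; simp [evalLeft, LinearMap.rTensor_add])
    (fun k v l ↦ by ext q; simp [evalLeft, LinearMap.rTensor_smul])

lemma slice_apply (φ : V ⊗[K] Q →ₗ[Λ ⊗[K] Γ] V' ⊗[K] T) (v : V) (l : Module.Dual K V') (q : Q) :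
    slice φ v l q = evalLeft l (φ (v ⊗ₜ q)) := rfl

lemma slice_smul (φ : V ⊗[K] Q →ₗ[Λ ⊗[K] Γ] V' ⊗[K] T) (a : Λ) (v : V) (l : Module.Dual K V') :
    slice φ (a • v) l = slice φ v (l ∘ₗ Algebra.lsmul K K V' a) := by
  ext q
  have hv : (a • v) ⊗ₜ[K] q = (a ⊗ₜ[K] (1 : Γ)) • v ⊗ₜ[K] q := by
    rw [tensorTensor_smul_tmul, one_smul]
  rw [slice_apply, hv, map_smul, evalLeft_smul, one_smul, slice_apply]

lemma eq_of_forall_dual {W : Type*} [AddCommGroup W] [Module K W] {v w : W}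
    (h : ∀ l : Module.Dual K W, l v = l w) : v = w := by
  rw [← sub_eq_zero, ← Module.forall_dual_apply_eq_zero_iff K]
  exact fun l ↦ by rw [map_sub, h, sub_self]

/-- The contraction of `φ : V ⊗ Q → V' ⊗ T` along a functional `ω` on `Hom_Γ(Q, T)`: the
`Λ`-linear map `V → V'` given by `1 ⊗ ω` under `Hom_Γ(Q, V' ⊗ T) ≃ V' ⊗ Hom_Γ(Q, T)`.
It is encoded through the bidual of `V'`. -/
noncomputable def contract [FiniteDimensional K V'] (ω : Module.Dual K (Q →ₗ[Γ] T))
    (φ : V ⊗[K] Q →ₗ[Λ ⊗[K] Γ] V' ⊗[K] T) : V →ₗ[Λ] V' where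
  __ := (Module.evalEquiv K V').symm ∘ₗ (slice φ).compr₂ ω
  map_smul' a v := eq_of_forall_dual (K := K) fun l ↦ by
    trans ω (slice φ (a • v) l)
    · exact Module.apply_evalEquiv_symm_apply K V' l _
    · rw [slice_smul]
      exact (Module.apply_evalEquiv_symm_apply K V' (l ∘ₗ Algebra.lsmul K K V' a)
        ((slice φ).compr₂ ω v)).symm

lemma dual_contract [FiniteDimensional K V'] (ω : Module.Dual K (Q →ₗ[Γ] T))
    (φ : V ⊗[K] Q →ₗ[Λ ⊗[K] Γ] V' ⊗[K] T) (l : Module.Dual K V') (v : V) :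
    l (contract ω φ v) = ω (slice φ v l) :=
  Module.apply_evalEquiv_symm_apply K V' l _

lemma contract_add [FiniteDimensional K V'] (ω : Module.Dual K (Q →ₗ[Γ] T))
    (φ ψ : V ⊗[K] Q →ₗ[Λ ⊗[K] Γ] V' ⊗[K] T) :
    contract ω (φ + ψ) = contract ω φ + contract ω ψ := by
  refine LinearMap.ext fun v ↦ eq_of_forall_dual (K := K) fun l ↦ ?_
  have hs : slice (φ + ψ) v l = slice φ v l + slice ψ v l := by
    ext q
    exact map_add (evalLeft l) _ _
  rw [LinearMap.add_apply, map_add, dual_contract, dual_contract, dual_contract, hs, map_add]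

lemma contract_zero [FiniteDimensional K V'] (φ : V ⊗[K] Q →ₗ[Λ ⊗[K] Γ] V' ⊗[K] T) :
    contract 0 φ = 0 :=
  LinearMap.ext fun v ↦ eq_of_forall_dual (K := K) fun l ↦ by simp [dual_contract]

lemma contract_id [FiniteDimensional K V] (ω : Module.Dual K (Q →ₗ[Γ] Q))
    (hω : ω LinearMap.id = 1) :
    contract ω (LinearMap.id : V ⊗[K] Q →ₗ[Λ ⊗[K] Γ] V ⊗[K] Q) = LinearMap.id := by
  refine LinearMap.ext fun v ↦ eq_of_forall_dual (K := K) fun l ↦ ?_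
  have hs : slice (LinearMap.id : V ⊗[K] Q →ₗ[Λ ⊗[K] Γ] V ⊗[K] Q) v l =
      l v • LinearMap.id := rfl
  rw [dual_contract, hs, map_smul, hω, smul_eq_mul, mul_one, LinearMap.id_apply]

lemma contract_comp_tensorMap [FiniteDimensional K V''] (ω : Module.Dual K (Q →ₗ[Γ] T))
    (φ : V' ⊗[K] Q' →ₗ[Λ ⊗[K] Γ] V'' ⊗[K] T) (d : V →ₗ[Λ] V') (g : Q →ₗ[Γ] Q') :
    contract ω (φ ∘ₗ tensorMap d g) = contract (ω ∘ₗ LinearMap.lcomp K T g) φ ∘ₗ d := by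
  refine LinearMap.ext fun v ↦ eq_of_forall_dual (K := K) fun l ↦ ?_
  rw [LinearMap.comp_apply, dual_contract, dual_contract]
  rfl

lemma contract_tensorMap_comp [FiniteDimensional K V'] [FiniteDimensional K V'']
    (ω : Module.Dual K (Q →ₗ[Γ] T)) (φ : V ⊗[K] Q →ₗ[Λ ⊗[K] Γ] V' ⊗[K] Q') (d : V' →ₗ[Λ] V'')
    (g : Q' →ₗ[Γ] T) :
    contract ω (tensorMap d g ∘ₗ φ) = d ∘ₗ contract (ω ∘ₗ LinearMap.compRight K g) φ := by
  refine LinearMap.ext fun v ↦ eq_of_forall_dual (K := K) fun l ↦ ?_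
  have hs : slice (tensorMap d g ∘ₗ φ) v l = g ∘ₗ slice φ v (l ∘ₗ d.restrictScalars K) := by
    ext q
    exact evalLeft_tensorMap l d g _
  rw [dual_contract, hs]
  exact (dual_contract (ω ∘ₗ LinearMap.compRight K g) φ (l ∘ₗ d.restrictScalars K) v).symm

lemma exists_dual_eq_one_of_notMem {W : Type*} [AddCommGroup W] [Module K W] {p : Submodule K W}
    {x : W} (hx : x ∉ p) : ∃ ω : Module.Dual K W, ω x = 1 ∧ ∀ y ∈ p, ω y = 0 := by
  obtain ⟨ω, hωx, hωp⟩ := p.exists_le_ker_of_notMem hx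
  exact ⟨(ω x)⁻¹ • ω, inv_mul_cancel₀ hωx, fun y hy ↦ by simp [LinearMap.mem_ker.1 (hωp hy)]⟩

lemma exists_retraction_or_of_comp_tensorMap_add_comp_tensorMap [FiniteDimensional K V]
    {d : V →ₗ[Λ] V'} {g : Q →ₗ[Γ] Q'} {r : V' ⊗[K] Q →ₗ[Λ ⊗[K] Γ] V ⊗[K] Q}
    {s : V ⊗[K] Q' →ₗ[Λ ⊗[K] Γ] V ⊗[K] Q}
    (h : r ∘ₗ tensorMap d LinearMap.id + s ∘ₗ tensorMap LinearMap.id g = LinearMap.id) :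
    (∃ ρ, ρ ∘ₗ d = LinearMap.id) ∨ ∃ ρ, ρ ∘ₗ g = LinearMap.id := by
  by_contra! ⟨hd, hg⟩
  obtain ⟨ω, hω, hωg⟩ : ∃ ω : Module.Dual K (Q →ₗ[Γ] Q),
      ω LinearMap.id = 1 ∧ ∀ y ∈ LinearMap.range (LinearMap.lcomp K Q g), ω y = 0 :=
    exists_dual_eq_one_of_notMem fun ⟨ρ, hρ⟩ ↦ hg ρ hρ
  have hωg' : ω ∘ₗ LinearMap.lcomp K Q g = 0 := LinearMap.ext fun ρ ↦ hωg _ ⟨ρ, rfl⟩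
  apply hd (contract (ω ∘ₗ LinearMap.lcomp K Q LinearMap.id) r)
  calc _ = contract ω (r ∘ₗ tensorMap d LinearMap.id + s ∘ₗ tensorMap LinearMap.id g) := by
        rw [contract_add, contract_comp_tensorMap, contract_comp_tensorMap, hωg', contract_zero,
          LinearMap.zero_comp, add_zero]
    _ = LinearMap.id := by rw [h, contract_id ω hω]

lemma exists_section_or_of_tensorMap_comp_add_tensorMap_comp [FiniteDimensional K V]
    [FiniteDimensional K V'] {d : V' →ₗ[Λ] V} {g : Q' →ₗ[Γ] Q}
    {r : V ⊗[K] Q →ₗ[Λ ⊗[K] Γ] V' ⊗[K] Q} {s : V ⊗[K] Q →ₗ[Λ ⊗[K] Γ] V ⊗[K] Q'}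
    (h : tensorMap d LinearMap.id ∘ₗ r + tensorMap LinearMap.id g ∘ₗ s = LinearMap.id) :
    (∃ σ, d ∘ₗ σ = LinearMap.id) ∨ ∃ σ, g ∘ₗ σ = LinearMap.id := by
  by_contra! ⟨hd, hg⟩
  obtain ⟨ω, hω, hωg⟩ : ∃ ω : Module.Dual K (Q →ₗ[Γ] Q),
      ω LinearMap.id = 1 ∧ ∀ y ∈ LinearMap.range (LinearMap.compRight K (M := Q) g), ω y = 0 :=
    exists_dual_eq_one_of_notMem fun ⟨σ, hσ⟩ ↦ hg σ hσ
  have hωg' : ω ∘ₗ LinearMap.compRight K g = 0 := LinearMap.ext fun σ ↦ hωg _ ⟨σ, rfl⟩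
  apply hd (contract (ω ∘ₗ LinearMap.compRight K LinearMap.id) r)
  calc _ = contract ω (tensorMap d LinearMap.id ∘ₗ r + tensorMap LinearMap.id g ∘ₗ s) := by
        rw [contract_add, contract_tensorMap_comp, contract_tensorMap_comp, hωg', contract_zero,
          LinearMap.comp_zero, add_zero]
    _ = LinearMap.id := by rw [h, contract_id ω hω]

end Contraction

section ExternalTensor

open scoped ModuleCat

variable (K Λ Γ : Type u) [Field K] [Ring Λ] [Ring Γ] [Algebra K Λ] [Algebra K Γ]

/-- The external tensor product `(M, N) ↦ M ⊗ N` as a bifunctor to `Λ ⊗ Γ`-modules. The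
`K`-structures on `M` and `N` are the ones restricted from `Λ` and `Γ`. -/
noncomputable def externalTensor :
    ModuleCat.{u} Λ ⥤ ModuleCat.{u} Γ ⥤ ModuleCat.{u} (Λ ⊗[K] Γ) where
  obj M :=
    { obj N := .of (Λ ⊗[K] Γ) (M ⊗[K] N)
      map g := ModuleCat.ofHom (tensorMap LinearMap.id g.hom)
      map_id _ := ModuleCat.hom_ext tensorMap_id
      map_comp g g' := ModuleCat.hom_ext (tensorMap_comp LinearMap.id LinearMap.id g.hom g'.hom) }
  map f :=
    { app N := ModuleCat.ofHom (tensorMap f.hom LinearMap.id)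
      naturality _ _ _ := ModuleCat.hom_ext (tensorTensor_hom_ext fun _ _ ↦ rfl) }
  map_id _ := by ext N : 2; exact ModuleCat.hom_ext tensorMap_id
  map_comp f f' := by
    ext N : 2
    exact ModuleCat.hom_ext (tensorMap_comp f.hom f'.hom LinearMap.id LinearMap.id)

variable {K Λ Γ}

instance (M : ModuleCat.{u} Λ) : ((externalTensor K Λ Γ).obj M).PreservesZeroMorphisms where
  map_zero _ _ := ModuleCat.hom_ext (tensorTensor_hom_ext fun _ _ ↦ tmul_zero _ _)

instance (N : ModuleCat.{u} Γ) :
    ((externalTensor K Λ Γ).flip.obj N).PreservesZeroMorphisms where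
  map_zero _ _ := ModuleCat.hom_ext (tensorTensor_hom_ext fun _ _ ↦ zero_tmul _ _)

lemma shortExact_map_externalTensor_obj (M : ModuleCat.{u} Λ) (S : ShortComplex (ModuleCat.{u} Γ))
    (hS : S.ShortExact) : (S.map ((externalTensor K Λ Γ).obj M)).ShortExact :=
  ModuleCat.shortComplex_shortExact _
    (lTensor_exact (R := K) M (f := S.f.hom.restrictScalars K) (g := S.g.hom.restrictScalars K)
      ((ShortComplex.ShortExact.moduleCat_exact_iff_function_exact S).1 hS.exact)
      hS.moduleCat_surjective_g)
    (Module.Flat.lTensor_preserves_injective_linearMap (S.f.hom.restrictScalars K)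
      hS.moduleCat_injective_f)
    (LinearMap.lTensor_surjective M (g := S.g.hom.restrictScalars K) hS.moduleCat_surjective_g)

lemma shortExact_map_externalTensor_flip_obj (N : ModuleCat.{u} Γ)
    (S : ShortComplex (ModuleCat.{u} Λ)) (hS : S.ShortExact) :
    (S.map ((externalTensor K Λ Γ).flip.obj N)).ShortExact :=
  ModuleCat.shortComplex_shortExact _
    (rTensor_exact (R := K) N (f := S.f.hom.restrictScalars K) (g := S.g.hom.restrictScalars K)
      ((ShortComplex.ShortExact.moduleCat_exact_iff_function_exact S).1 hS.exact)
      hS.moduleCat_surjective_g)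
    (Module.Flat.rTensor_preserves_injective_linearMap (S.f.hom.restrictScalars K)
      hS.moduleCat_injective_f)
    (LinearMap.rTensor_surjective N (g := S.g.hom.restrictScalars K) hS.moduleCat_surjective_g)

end ExternalTensor

section ProjectiveTensor

variable {K Λ Γ M N : Type*} [Field K] [Ring Λ] [Ring Γ] [Algebra K Λ] [Algebra K Γ]
  [AddCommGroup M] [Module K M] [Module Λ M] [IsScalarTower K Λ M]
  [AddCommGroup N] [Module K N] [Module Γ N] [IsScalarTower K Γ N]

/-- The external tensor product of free modules is free. -/
noncomputable def finsuppTensorFinsuppEquiv (ι κ : Type*) :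
    (ι →₀ Λ) ⊗[K] (κ →₀ Γ) ≃ₗ[Λ ⊗[K] Γ] (ι × κ →₀ Λ ⊗[K] Γ) where
  __ := finsuppTensorFinsupp K K Λ Γ ι κ
  map_smul' := map_smul_of_map_tmul_smul (finsuppTensorFinsupp K K Λ Γ ι κ).toLinearMap
    fun a b x y ↦ by
      ext ⟨i, k⟩
      simp

lemma projective_tensor [Module.Projective Λ M] [Module.Projective Γ N] :
    Module.Projective (Λ ⊗[K] Γ) (M ⊗[K] N) := by
  obtain ⟨s, hs⟩ := Module.projective_def'.1 (inferInstance : Module.Projective Λ M)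
  obtain ⟨t, ht⟩ := Module.projective_def'.1 (inferInstance : Module.Projective Γ N)
  have := Module.Projective.of_equiv (finsuppTensorFinsuppEquiv (K := K) (Λ := Λ) (Γ := Γ) M N).symm
  refine Module.Projective.of_split (tensorMap s t)
    (tensorMap (Finsupp.linearCombination Λ id) (Finsupp.linearCombination Γ id)) ?_
  rw [← tensorMap_comp, hs, ht, tensorMap_id]

end ProjectiveTensor

section InjectiveTensor

variable {K Λ Γ : Type u} [Field K] [Ring Λ] [Ring Γ] [Algebra K Λ] [Algebra K Γ]

lemma injective_coextendScalars (X : ModuleCat.{u} K) :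
    Injective ((ModuleCat.coextendScalars (algebraMap K Λ)).obj X) :=
  have : Module.Injective K X := Module.injective_of_isSemisimpleRing K X
  have : Injective X := Module.injective_object_of_injective_module K X
  Injective.injective_of_adjoint (ModuleCat.restrictCoextendScalarsAdj (algebraMap K Λ)) X

lemma finite_restrictScalars [FiniteDimensional K Λ] (X : ModuleCat.{u} Λ) [Module.Finite Λ X] :
    FiniteDimensional K ((ModuleCat.restrictScalars (algebraMap K Λ)).obj X) := by
  let : Module K X := Module.restrictScalars K Λ X
  have : IsScalarTower K Λ X := .restrictScalars K Λ X
  exact Module.Finite.trans (R := K) Λ X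

lemma finite_coextendScalars [FiniteDimensional K Λ] (X : ModuleCat.{u} K) [FiniteDimensional K X] :
    Module.Finite Λ ((ModuleCat.coextendScalars (algebraMap K Λ)).obj X) := by
  let L := (ModuleCat.restrictScalars (algebraMap K Λ)).obj (ModuleCat.of Λ Λ)
  have : FiniteDimensional K L := finite_restrictScalars _
  have : IsScalarTower K Λ (L →ₗ[K] X) := ⟨fun k a φ ↦ LinearMap.ext fun (b : Λ) ↦ by
    have h : b * k • a = k • (b * a) := mul_smul_comm k b a
    exact (congrArg φ (h.trans (Algebra.smul_def _ _))).trans (φ.map_smul k (b * a : Λ))⟩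
  have : Module.Finite Λ (L →ₗ[K] X) := Module.Finite.of_restrictScalars_finite K Λ _
  exact Module.Finite.equiv (ModuleCat.CoextendScalars.equiv (algebraMap K Λ) X).symm

lemma hasCosyzygies_isFG (K : Type u) [Field K] [Algebra K Λ] [FiniteDimensional K Λ] :
    HasCosyzygies (ModuleCat.isFG.{u} Λ) := by
  intro X (hX : Module.Finite Λ X)
  let i := (ModuleCat.restrictCoextendScalarsAdj.{u} (algebraMap K Λ)).unit.app X
  have := finite_restrictScalars (K := K) X
  have hI := finite_coextendScalars (Λ := Λ)
    ((ModuleCat.restrictScalars (algebraMap K Λ)).obj X)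
  have hsurj : Function.Surjective (Limits.cokernel.π i) :=
    (ModuleCat.epi_iff_surjective _).1 inferInstance
  exact ⟨.mk i (Limits.cokernel.π i) (Limits.cokernel.condition i),
    { exact := ShortComplex.exact_cokernel i }, rfl, injective_coextendScalars _, hI,
    hI.of_surjective (Limits.cokernel.π i).hom hsurj⟩

-- `M` embeds into the coinduced module `Hom_K(Λ, M)` by `x ↦ (a ↦ a • x)`, and injectivity
-- splits this embedding.
lemma exists_averaging (M : Type u) [AddCommGroup M] [Module K M] [Module Λ M] [IsScalarTower K Λ M]
    [Module.Injective Λ M] :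
    ∃ ρ : (Λ →ₗ[K] M) →ₗ[K] M, (∀ a φ, ρ (φ ∘ₗ LinearMap.mulRight K a) = a • ρ φ) ∧
      ∀ x, ρ ((LinearMap.toSpanSingleton Λ M x).restrictScalars K) = x := by
  let X := (ModuleCat.restrictScalars (algebraMap K Λ)).obj (ModuleCat.of Λ M)
  let i := (ModuleCat.restrictCoextendScalarsAdj.{u} (algebraMap K Λ)).unit.app (ModuleCat.of Λ M)
  obtain ⟨r, hr⟩ := ‹Module.Injective Λ M›.out i.hom
    ((ModuleCat.mono_iff_injective i).1 inferInstance) LinearMap.id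
  let E (φ : Λ →ₗ[K] M) : (ModuleCat.coextendScalars (algebraMap K Λ)).obj X :=
    (ModuleCat.CoextendScalars.equiv (algebraMap K Λ) X).symm
      { toFun := φ
        map_add' := φ.map_add
        map_smul' k (b : Λ) := by
          have hk : k • φ b = algebraMap K Λ k • φ b := algebra_compatible_smul Λ k (φ b)
          have hb : k • b = algebraMap K Λ k * b := Algebra.smul_def k b
          exact (congrArg φ hb).symm.trans ((φ.map_smul k b).trans hk) }
  have hE (a : Λ) (φ : Λ →ₗ[K] M) : E (φ ∘ₗ LinearMap.mulRight K a) = a • E φ := rfl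
  refine ⟨{ toFun φ := r (E φ), map_add' φ ψ := r.map_add (E φ) (E ψ), map_smul' k φ := ?_ },
    fun a φ ↦ r.map_smul a (E φ), fun x ↦ hr x⟩
  have hk : k • φ = φ ∘ₗ LinearMap.mulRight K (algebraMap K Λ k) := by
    ext b
    simp [← Algebra.commutes k b, ← Algebra.smul_def]
  rw [hk, hE, r.map_smul]
  exact algebraMap_smul Λ k (r (E φ))

-- Extend `g` to a `Γ`-linear map `h`, then let `ρ` average the orbits `a ↦ h ((a ⊗ 1) • z)`.
lemma injective_of_averaging {X : Type u} [AddCommGroup X] [Module K X] [Module (Λ ⊗[K] Γ) X]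
    [IsScalarTower K (Λ ⊗[K] Γ) X] [Module Γ X] [Module.Injective Γ X]
    (hΓ : ∀ (b : Γ) (x : X), b • x = ((1 : Λ) ⊗ₜ[K] b) • x)
    (ρ : (Λ →ₗ[K] X) →+ X)
    (hρ_smul : ∀ (a : Λ) (b : Γ) φ, ρ (Algebra.lsmul K K X ((1 : Λ) ⊗ₜ[K] b) ∘ₗ φ ∘ₗ
      LinearMap.mulRight K a) = (a ⊗ₜ[K] b) • ρ φ)
    (hρ : ∀ x, ρ ((LinearMap.toSpanSingleton (Λ ⊗[K] Γ) X x).restrictScalars K ∘ₗ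
      (Algebra.TensorProduct.includeLeft : Λ →ₐ[K] Λ ⊗[K] Γ).toLinearMap) = x) :
    Module.Injective (Λ ⊗[K] Γ) X where
  out Y Z _ _ _ _ f hf g := by
    let j : Γ →ₐ[K] Λ ⊗[K] Γ := Algebra.TensorProduct.includeRight
    let : Module Γ Y := Module.compHom Y j.toRingHom
    let : Module Γ Z := Module.compHom Z j.toRingHom
    let f' : Y →ₗ[Γ] Z := { f with map_smul' b y := f.map_smul ((1 : Λ) ⊗ₜ b) y }
    let g' : Y →ₗ[Γ] X :=
      { g with map_smul' b y := (g.map_smul ((1 : Λ) ⊗ₜ b) y).trans (hΓ b (g y)).symm }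
    obtain ⟨h, hh⟩ := ‹Module.Injective Γ X›.out f' hf g'
    have h_smul (b : Γ) (z : Z) : h (((1 : Λ) ⊗ₜ[K] b) • z) = ((1 : Λ) ⊗ₜ[K] b) • h z :=
      (h.map_smul b z).trans (hΓ b (h z))
    let orbit : Z →+ Λ →ₗ[K] X := .mk' (fun z ↦
      { toFun a := h ((a ⊗ₜ[K] (1 : Γ)) • z)
        map_add' a a' := by rw [add_tmul, add_smul, map_add]
        map_smul' k a := by
          have hk : (k • a) ⊗ₜ[K] (1 : Γ) = (1 : Λ) ⊗ₜ[K] algebraMap K Γ k * a ⊗ₜ 1 := by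
            rw [Algebra.TensorProduct.tmul_mul_tmul, one_mul, mul_one, smul_tmul,
              Algebra.algebraMap_eq_smul_one]
          rw [hk, mul_smul, h_smul, ← Algebra.TensorProduct.algebraMap_apply', algebraMap_smul]
          rfl })
      fun z z' ↦ by ext a; simp
    have orbit_smul (a : Λ) (b : Γ) (z : Z) : orbit ((a ⊗ₜ[K] b) • z) =
        Algebra.lsmul K K X ((1 : Λ) ⊗ₜ[K] b) ∘ₗ orbit z ∘ₗ LinearMap.mulRight K a := by
      ext a'
      have hab : a' ⊗ₜ[K] (1 : Γ) * a ⊗ₜ b = (1 : Λ) ⊗ₜ b * (a' * a) ⊗ₜ 1 := by simp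
      change h ((a' ⊗ₜ[K] (1 : Γ)) • (a ⊗ₜ[K] b) • z) =
        ((1 : Λ) ⊗ₜ[K] b) • h (((a' * a) ⊗ₜ[K] (1 : Γ)) • z)
      rw [← mul_smul, hab, mul_smul, h_smul]
    refine ⟨{ ρ.comp orbit with map_smul' c z := ?_ }, fun y ↦ ?_⟩
    · change ρ (orbit (c • z)) = c • ρ (orbit z)
      induction c with
      | zero => simp
      | add c c' hc hc' => rw [add_smul, map_add, map_add, hc, hc', add_smul]
      | tmul a b => rw [orbit_smul, hρ_smul]
    · refine (congrArg ρ (LinearMap.ext fun a ↦ ?_)).trans (hρ (g y))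
      change h ((a ⊗ₜ[K] (1 : Γ)) • f y) = (a ⊗ₜ[K] (1 : Γ)) • g y
      rw [← f.map_smul, ← g.map_smul]
      exact hh _

lemma injective_tensorRightModule {M N : Type u}
    [AddCommGroup M] [Module K M] [FiniteDimensional K M]
    [AddCommGroup N] [Module K N] [Module Γ N] [IsScalarTower K Γ N] [Module.Injective Γ N] :
    letI : Module Γ (M ⊗[K] N) := tensorRightModule
    Module.Injective Γ (M ⊗[K] N) := by
  let : Module Γ (M ⊗[K] N) := tensorRightModule
  let comm : N ⊗[K] M ≃ₗ[Γ] M ⊗[K] N :=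
    { TensorProduct.comm K N M with
      map_smul' b x := congrArg (fun y ↦ (TensorProduct.comm K M N).symm (b • y))
        ((TensorProduct.comm K M N).apply_symm_apply x).symm }
  let coordinates : N ⊗[K] M ≃ₗ[Γ] (Fin (Module.finrank K M) → N) :=
    AlgebraTensorModule.congr (.refl Γ N) (Module.finBasis K M).repr ≪≫ₗ
      TensorProduct.finsuppScalarRight K Γ N _ ≪≫ₗ Finsupp.linearEquivFunOnFinite Γ N _
  have hN : Module.Baer Γ (Fin (Module.finrank K M) → N) := Module.Baer.of_injective inferInstance
  exact (Module.Baer.of_equiv (coordinates.symm ≪≫ₗ comm) hN).injective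

section TensorAveraging

variable [FiniteDimensional K Λ] {M N : Type u} [AddCommGroup M] [Module K M] [AddCommGroup N]
  [Module K N]

/-- The extension of an averaging map `ρ : Hom_K(Λ, M) → M` to `M ⊗ N`, given by `ρ ⊗ 1` under
`Hom_K(Λ, M ⊗ N) ≃ Hom_K(Λ, M) ⊗ N`. -/
noncomputable def tensorAveraging (ρ : (Λ →ₗ[K] M) →ₗ[K] M) : (Λ →ₗ[K] M ⊗[K] N) →ₗ[K] M ⊗[K] N :=
  ρ.rTensor N ∘ₗ (rTensorHomEquivHomRTensor K Λ M N).symm.toLinearMap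

lemma tensorAveraging_eq_tmul (ρ : (Λ →ₗ[K] M) →ₗ[K] M) {φ : Λ →ₗ[K] M} {n : N}
    {ψ : Λ →ₗ[K] M ⊗[K] N} (h : ∀ a, ψ a = φ a ⊗ₜ n) : tensorAveraging ρ ψ = ρ φ ⊗ₜ n := by
  have hψ : (rTensorHomEquivHomRTensor K Λ M N).symm ψ = φ ⊗ₜ n := by
    rw [LinearEquiv.symm_apply_eq]
    ext a
    simp [h]
  exact congrArg (ρ.rTensor N) hψ

variable [Module Λ M] [IsScalarTower K Λ M] [Module Γ N] [IsScalarTower K Γ N]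

lemma tensorAveraging_smul {ρ : (Λ →ₗ[K] M) →ₗ[K] M}
    (hρ : ∀ a φ, ρ (φ ∘ₗ LinearMap.mulRight K a) = a • ρ φ) (a : Λ) (b : Γ)
    (ψ : Λ →ₗ[K] M ⊗[K] N) :
    tensorAveraging ρ (Algebra.lsmul K K (M ⊗[K] N) ((1 : Λ) ⊗ₜ[K] b) ∘ₗ ψ ∘ₗ
      LinearMap.mulRight K a) = (a ⊗ₜ[K] b) • tensorAveraging ρ ψ := by
  obtain ⟨t, rfl⟩ := (rTensorHomEquivHomRTensor K Λ M N).surjective ψ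
  induction t with
  | zero => simp
  | add t t' ht ht' =>
    simp only [map_add, LinearMap.add_comp, LinearMap.comp_add, ht, ht', smul_add]
  | tmul φ n =>
    rw [tensorAveraging_eq_tmul ρ (φ := φ ∘ₗ LinearMap.mulRight K a) (n := b • n)
        fun a' ↦ by simp [tensorTensor_smul_tmul],
      tensorAveraging_eq_tmul ρ (φ := φ) (n := n) fun a' ↦ by simp,
      hρ, tensorTensor_smul_tmul]

lemma tensorAveraging_orbit {ρ : (Λ →ₗ[K] M) →ₗ[K] M}
    (hρ : ∀ x, ρ ((LinearMap.toSpanSingleton Λ M x).restrictScalars K) = x) (x : M ⊗[K] N) :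
    tensorAveraging ρ ((LinearMap.toSpanSingleton (Λ ⊗[K] Γ) _ x).restrictScalars K ∘ₗ
      (Algebra.TensorProduct.includeLeft : Λ →ₐ[K] Λ ⊗[K] Γ).toLinearMap) = x := by
  induction x with
  | zero => convert (tensorAveraging ρ).map_zero; ext; simp
  | add x y hx hy =>
    refine Eq.trans ?_ (congrArg₂ (· + ·) hx hy)
    rw [← map_add]
    congr 1
    ext
    simp
  | tmul m n =>
    rw [tensorAveraging_eq_tmul ρ (φ := (LinearMap.toSpanSingleton Λ M m).restrictScalars K)
      (n := n) fun a ↦ by simp [tensorTensor_smul_tmul], hρ]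

lemma injective_tensor [FiniteDimensional K M] [Module.Injective Λ M] [Module.Injective Γ N] :
    Module.Injective (Λ ⊗[K] Γ) (M ⊗[K] N) := by
  obtain ⟨ρ, hρ_smul, hρ⟩ := exists_averaging (K := K) (Λ := Λ) M
  let : Module Γ (M ⊗[K] N) := tensorRightModule
  have : Module.Injective Γ (M ⊗[K] N) := injective_tensorRightModule
  refine injective_of_averaging (fun b x ↦ ?_) (tensorAveraging ρ).toAddMonoidHom
    (tensorAveraging_smul hρ_smul) (tensorAveraging_orbit hρ)
  induction x with
  | zero => simp
  | add x y hx hy => rw [smul_add, hx, hy, smul_add]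
  | tmul m n => exact (rsmul_tmul b m n).trans (by rw [tensorTensor_smul_tmul, one_smul])

end TensorAveraging

end InjectiveTensor

section ExternalTensorDimension

open scoped ModuleCat

variable {K Λ Γ : Type u} [Field K] [Ring Λ] [Ring Γ] [Algebra K Λ] [Algebra K Γ]

lemma hasSyzygies_isFG [IsNoetherianRing Λ] : HasSyzygies (ModuleCat.isFG.{u} Λ) := by
  intro X (hX : Module.Finite Λ X)
  obtain ⟨n, f, hf⟩ := Module.Finite.exists_fin' Λ X
  exact ⟨LinearMap.shortComplexKer f, LinearMap.shortExact_shortComplexKer hf, rfl,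
    inferInstanceAs (Projective (ModuleCat.of Λ (Fin n → Λ))),
    inferInstanceAs (Module.Finite Λ f.ker), inferInstanceAs (Module.Finite Λ (Fin n → Λ))⟩

lemma finiteDimensional_of_isFG [FiniteDimensional K Λ] {M : ModuleCat.{u} Λ}
    (hM : ModuleCat.isFG Λ M) : FiniteDimensional K M :=
  have : Module.Finite Λ M := hM
  Module.Finite.trans (R := K) Λ M

lemma projective_externalTensor (M : ModuleCat.{u} Λ) (N : ModuleCat.{u} Γ) [Projective M]
    [Projective N] : Projective (((externalTensor K Λ Γ).obj M).obj N) := by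
  have := (IsProjective.iff_projective (R := Λ) M).2 ‹_›
  have := (IsProjective.iff_projective (R := Γ) N).2 ‹_›
  exact (IsProjective.iff_projective (R := Λ ⊗[K] Γ) (M ⊗[K] N)).1 projective_tensor

lemma injective_externalTensor [FiniteDimensional K Λ] {M : ModuleCat.{u} Λ}
    (hM : ModuleCat.isFG Λ M) (N : ModuleCat.{u} Γ) [Injective M]
    [Injective N] : Injective (((externalTensor K Λ Γ).obj M).obj N) := by
  have := Module.injective_module_of_injective_object Λ M
  have := Module.injective_module_of_injective_object Γ N
  have := finiteDimensional_of_isFG (K := K) hM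
  exact (Module.injective_iff_injective_object (Λ ⊗[K] Γ) (M ⊗[K] N)).1 injective_tensor

lemma not_hasProjectiveDimensionLE_one_externalTensor [FiniteDimensional K Λ]
    {M : ModuleCat.{u} Λ} (hM : ModuleCat.isFG Λ M) {N : ModuleCat.{u} Γ}
    (hM' : ¬ Projective M) (hN' : ¬ Projective N) :
    ¬ HasProjectiveDimensionLE (((externalTensor K Λ Γ).obj M).obj N) 1 := by
  intro hdim
  have := IsNoetherianRing.of_finite K Λ
  obtain ⟨S, hS, rfl, hP, hΩ, -⟩ := hasSyzygies_isFG M hM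
  obtain ⟨T, hT, rfl, hQ, -, -⟩ := hasSyzygies_top N trivial
  let F := externalTensor K Λ Γ
  have : Projective (T.map (F.obj S.X₂)).X₂ := projective_externalTensor S.X₂ T.X₂
  obtain ⟨r, s, hrs⟩ := exists_homotopy_of_hasProjectiveDimensionLE_one
    (shortExact_map_externalTensor_obj S.X₁ T hT) (shortExact_map_externalTensor_obj S.X₂ T hT)
    (T.mapNatTrans (F.map S.f)) (shortExact_map_externalTensor_flip_obj T.X₃ S hS) hdim
  have := finiteDimensional_of_isFG (K := K) hΩ
  rcases exists_retraction_or_of_comp_tensorMap_add_comp_tensorMap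
      (d := S.f.hom) (g := T.f.hom) (congrArg ModuleCat.Hom.hom hrs) with ⟨ρ, hρ⟩ | ⟨ρ, hρ⟩
  · exact hM' (projective_X₃_of_retraction hS (ModuleCat.ofHom ρ) (ModuleCat.hom_ext hρ))
  · exact hN' (projective_X₃_of_retraction hT (ModuleCat.ofHom ρ) (ModuleCat.hom_ext hρ))

lemma not_hasInjectiveDimensionLE_one_externalTensor [FiniteDimensional K Λ]
    {M : ModuleCat.{u} Λ} (hM : ModuleCat.isFG Λ M) {N : ModuleCat.{u} Γ}
    (hM' : ¬ Injective M) (hN' : ¬ Injective N) :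
    ¬ HasInjectiveDimensionLE (((externalTensor K Λ Γ).obj M).obj N) 1 := by
  intro hdim
  obtain ⟨S, hS, rfl, hI, hIfg, hΩ⟩ := hasCosyzygies_isFG K M hM
  obtain ⟨T, hT, rfl, hJ, -, -⟩ := hasCosyzygies_top N trivial
  let F := externalTensor K Λ Γ
  have : Injective (T.map (F.obj S.X₂)).X₂ := injective_externalTensor hIfg T.X₂
  obtain ⟨r, s, hrs⟩ := exists_homotopy_of_hasInjectiveDimensionLE_one
    (shortExact_map_externalTensor_obj S.X₃ T hT) (shortExact_map_externalTensor_obj S.X₂ T hT)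
    (T.mapNatTrans (F.map S.g)) (shortExact_map_externalTensor_flip_obj T.X₁ S hS) hdim
  have := finiteDimensional_of_isFG (K := K) hΩ
  have := finiteDimensional_of_isFG (K := K) hIfg
  rcases exists_section_or_of_tensorMap_comp_add_tensorMap_comp
      (d := S.g.hom) (g := T.g.hom) (congrArg ModuleCat.Hom.hom hrs) with ⟨σ, hσ⟩ | ⟨σ, hσ⟩
  · exact hM' (injective_X₁_of_section hS (ModuleCat.ofHom σ) (ModuleCat.hom_ext hσ))
  · exact hN' (injective_X₁_of_section hT (ModuleCat.ofHom σ) (ModuleCat.hom_ext hσ))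

lemma hasProjectiveDimensionLE_externalTensor [IsNoetherianRing Λ] {M : ModuleCat.{u} Λ}
    (hM : ModuleCat.isFG Λ M) {N : ModuleCat.{u} Γ} {n m : ℕ} (hMn : HasProjectiveDimensionLE M n)
    (hNm : HasProjectiveDimensionLE N m) :
    HasProjectiveDimensionLE (((externalTensor K Λ Γ).obj M).obj N) (n + m) := by
  rw [add_comm]
  refine hasProjectiveDimensionLE_obj (F := (externalTensor K Λ Γ).flip.obj N)
    (shortExact_map_externalTensor_flip_obj N) hasSyzygies_isFG (fun P _ hP ↦ ?_) n M hM hMn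
  rw [← zero_add m]
  exact hasProjectiveDimensionLE_obj (F := (externalTensor K Λ Γ).obj P)
    (shortExact_map_externalTensor_obj P) hasSyzygies_top (fun Q _ _ ↦
      (projective_iff_hasProjectiveDimensionLE_zero _).1 (projective_externalTensor P Q))
    m N trivial hNm

lemma hasInjectiveDimensionLE_externalTensor [FiniteDimensional K Λ] {M : ModuleCat.{u} Λ}
    (hM : ModuleCat.isFG Λ M) {N : ModuleCat.{u} Γ} {n m : ℕ} (hMn : HasInjectiveDimensionLE M n)
    (hNm : HasInjectiveDimensionLE N m) :
    HasInjectiveDimensionLE (((externalTensor K Λ Γ).obj M).obj N) (n + m) := by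
  rw [add_comm]
  refine hasInjectiveDimensionLE_obj (F := (externalTensor K Λ Γ).flip.obj N)
    (shortExact_map_externalTensor_flip_obj N) (hasCosyzygies_isFG K) (fun I hI _ ↦ ?_) n M hM hMn
  rw [← zero_add m]
  exact hasInjectiveDimensionLE_obj (F := (externalTensor K Λ Γ).obj I)
    (shortExact_map_externalTensor_obj I) hasCosyzygies_top (fun J _ _ ↦
      injective_iff_hasInjectiveDimensionLT_one.1 (injective_externalTensor hI J))
    m N trivial hNm

lemma not_hasProjectiveDimensionLE_externalTensor [FiniteDimensional K Λ]
    {M : ModuleCat.{u} Λ} (hM : ModuleCat.isFG Λ M) {N : ModuleCat.{u} Γ} {a b : ℕ}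
    (hMa : HasProjectiveDimensionLE M (a + 1)) (hMa' : ¬ HasProjectiveDimensionLE M a)
    (hNb : HasProjectiveDimensionLE N (b + 1)) (hNb' : ¬ HasProjectiveDimensionLE N b) :
    ¬ HasProjectiveDimensionLE (((externalTensor K Λ Γ).obj M).obj N) (a + b + 1) := by
  have := IsNoetherianRing.of_finite K Λ
  rw [show a + b + 1 = b + 1 + a by lia]
  refine not_hasProjectiveDimensionLE_obj (F := (externalTensor K Λ Γ).flip.obj N)
    (shortExact_map_externalTensor_flip_obj N) hasSyzygies_isFG (fun P hP hP' ↦ ?_)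
    (fun X hX hX1 hX0 ↦ ?_) a M hM hMa hMa'
  · rw [projective_iff_hasProjectiveDimensionLE_zero] at hP'
    rw [← zero_add (b + 1)]
    exact hasProjectiveDimensionLE_externalTensor hP hP' hNb
  · rw [add_comm]
    refine not_hasProjectiveDimensionLE_obj (F := (externalTensor K Λ Γ).obj X)
      (shortExact_map_externalTensor_obj X) hasSyzygies_top (fun Q _ hQ ↦ ?_)
      (fun Y _ _ hY0 ↦ not_hasProjectiveDimensionLE_one_externalTensor hX hX0 hY0)
      b N trivial hNb hNb'
    rw [projective_iff_hasProjectiveDimensionLE_zero] at hQ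
    exact hasProjectiveDimensionLE_externalTensor hX hX1 hQ

lemma not_hasInjectiveDimensionLE_externalTensor [FiniteDimensional K Λ]
    {M : ModuleCat.{u} Λ} (hM : ModuleCat.isFG Λ M) {N : ModuleCat.{u} Γ} {a b : ℕ}
    (hMa : HasInjectiveDimensionLE M (a + 1)) (hMa' : ¬ HasInjectiveDimensionLE M a)
    (hNb : HasInjectiveDimensionLE N (b + 1)) (hNb' : ¬ HasInjectiveDimensionLE N b) :
    ¬ HasInjectiveDimensionLE (((externalTensor K Λ Γ).obj M).obj N) (a + b + 1) := by
  rw [show a + b + 1 = b + 1 + a by lia]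
  refine not_hasInjectiveDimensionLE_obj (F := (externalTensor K Λ Γ).flip.obj N)
    (shortExact_map_externalTensor_flip_obj N) (hasCosyzygies_isFG K) (fun I hI hI' ↦ ?_)
    (fun X hX hX1 hX0 ↦ ?_) a M hM hMa hMa'
  · rw [injective_iff_hasInjectiveDimensionLT_one] at hI'
    rw [← zero_add (b + 1)]
    exact hasInjectiveDimensionLE_externalTensor hI hI' hNb
  · rw [add_comm]
    refine not_hasInjectiveDimensionLE_obj (F := (externalTensor K Λ Γ).obj X)
      (shortExact_map_externalTensor_obj X) hasCosyzygies_top (fun J _ hJ ↦ ?_)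
      (fun Y _ _ hY0 ↦ not_hasInjectiveDimensionLE_one_externalTensor hX hX0 hY0)
      b N trivial hNb hNb'
    rw [injective_iff_hasInjectiveDimensionLT_one] at hJ
    exact hasInjectiveDimensionLE_externalTensor hX hX1 hJ

lemma eq_moduleOfAlgebraModule (M : Type u) [AddCommGroup M] [i : Module K M] [Module Λ M]
    [IsScalarTower K Λ M] : i = ModuleCat.moduleOfAlgebraModule (ModuleCat.of Λ M) :=
  Module.ext' _ _ fun k x ↦ algebra_compatible_smul Λ k x

end ExternalTensorDimension

theorem injDim_projDim_tensorProduct_general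
    (K Λ Γ M N : Type u) [Field K] [Ring Λ] [Ring Γ]
    [Algebra K Λ] [Algebra K Γ] [FiniteDimensional K Λ]
    [AddCommGroup M] [Module K M] [Module Λ M] [IsScalarTower K Λ M] [Module.Finite Λ M]
    [AddCommGroup N] [Module K N] [Module Γ N] [IsScalarTower K Γ N]
    (n m : ℕ) (hn : 1 ≤ n) (hm : 1 ≤ m) :
    (InjDimEq K Λ M n → InjDimEq K Γ N m →
      InjDimEq K (Λ ⊗[K] Γ) (M ⊗[K] N) (n + m)) ∧
    (ProjDimEq K Λ M n → ProjDimEq K Γ N m →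
      ProjDimEq K (Λ ⊗[K] Γ) (M ⊗[K] N) (n + m)) := by
  have := IsNoetherianRing.of_finite K Λ
  have hM : ModuleCat.isFG Λ (ModuleCat.of Λ M) := inferInstanceAs (Module.Finite Λ M)
  obtain rfl := eq_moduleOfAlgebraModule (K := K) (Λ := Λ) M
  obtain rfl := eq_moduleOfAlgebraModule (K := K) (Λ := Γ) N
  obtain ⟨a, rfl⟩ := Nat.exists_eq_add_of_le' hn
  obtain ⟨b, rfl⟩ := Nat.exists_eq_add_of_le' hm
  have hsum : a + 1 + (b + 1) = a + b + 1 + 1 := by lia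
  constructor
  · rw [injDimEq_succ_iff, injDimEq_succ_iff, hsum, injDimEq_succ_iff, ← hsum]
    exact fun ⟨hMa, hMa'⟩ ⟨hNb, hNb'⟩ ↦ ⟨hasInjectiveDimensionLE_externalTensor hM hMa hNb,
      not_hasInjectiveDimensionLE_externalTensor hM hMa hMa' hNb hNb'⟩
  · rw [projDimEq_succ_iff, projDimEq_succ_iff, hsum, projDimEq_succ_iff, ← hsum]
    exact fun ⟨hMa, hMa'⟩ ⟨hNb, hNb'⟩ ↦ ⟨hasProjectiveDimensionLE_externalTensor hM hMa hNb,
      not_hasProjectiveDimensionLE_externalTensor hM hMa hMa' hNb hNb'⟩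

open TensorProduct in
/-- For finite dimensional algebras `Λ`, `Γ` over a field `K`, `n, m ≥ 1`:
(1) if `id_Λ M = n` and `id_Γ N = m` then `id_{Λ⊗Γ} (M⊗N) = n+m`;
(2) if `pd_Λ M = n` and `pd_Γ N = m` then `pd_{Λ⊗Γ} (M⊗N) = n+m`. -/
theorem injDim_projDim_tensorProduct
    (K Λ Γ M N : Type u) [Field K] [Ring Λ] [Ring Γ]
    [Algebra K Λ] [Algebra K Γ] [FiniteDimensional K Λ] [FiniteDimensional K Γ]
    [AddCommGroup M] [Module K M] [Module Λ M] [IsScalarTower K Λ M] [Module.Finite Λ M]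
    [AddCommGroup N] [Module K N] [Module Γ N] [IsScalarTower K Γ N] [Module.Finite Γ N]
    (n m : ℕ) (hn : 1 ≤ n) (hm : 1 ≤ m) :
    (InjDimEq K Λ M n → InjDimEq K Γ N m →
      InjDimEq K (Λ ⊗[K] Γ) (M ⊗[K] N) (n + m)) ∧
    (ProjDimEq K Λ M n → ProjDimEq K Γ N m →
      ProjDimEq K (Λ ⊗[K] Γ) (M ⊗[K] N) (n + m)) :=
  injDim_projDim_tensorProduct_general K Λ Γ M N n m hn hm
end
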